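/- Suppose the integers k > 900, n ≥ 9 with n ≥ k + 2, ℓ ≥ 1, m ≥ 1 and digits d1, d2 ∈ {0,…,9} with d1 > 0, d1 ≠ d2 satisfy F_n^(k) = d1·((10^ℓ−1)/9)·10^{ℓ+m} + d2·((10^m−1)/9)·10^ℓ + d1·((10^ℓ−1)/9), and assume additionally that k/2 > ℓ·log 10/log 2. Then |(1/9)·(d1·10^ℓ − (d1 − d2))·10^{ℓ+m}·2^{−(n−2)} − 1| < 8·2^{−k/2}. -/

import Mathlib

/-!
Write `T = 2 ^ (k / 2)`. Multiplied by `9`, the equation becomes `9 * F n = A * 10 ^ M + c` with `A`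
and `|c|` at most `9 * 10 ^ ℓ ≤ 9 * T`. If `n - 2 < 5 * T`, the claim follows from
`0 ≤ 2 ^ (n - 2) - F n ≤ (n - 2) * 2 ^ (n - 2 - k)`.

Larger `n` do not occur. By Binet's formula `9 * f * α ^ (n - 1)` is then within `9 * T + 9` of
`A * 10 ^ M`, where `α < 2` is the dominant root of `X ^ k = X ^ (k - 1) + ⋯ + 1`, of degree at most
`k = O(log n)`, and `f` is its Binet coefficient. So the linear form
`(n - 1) * log α - M * log 10 + log (9 * f / A)` is exponentially small in `n`. Approximating
`log 10 / log α` by Dirichlet's theorem turns it into a linear form `log θ₂ + q * log θ₁` in which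
`log θ₁` is tiny, and there Laurent's interpolation determinants, with entries
`(r - s * q) ^ a * (θ₁ ^ r * θ₂ ^ s) ^ l`, give a contradiction: some such determinant is nonzero by
a zero estimate, hence not too small by Liouville's inequality, while it is very small because, with
`θ₂` close to `θ₁ ^ (-q)`, its entries are close to values of polynomials of low degree.
-/

open Finset Polynomial

section PolynomialDeterminants

theorem coeff_prod_sum_of_natDegree_le {R ι : Type*} [CommSemiring R] (s : Finset ι)
    (f : ι → R[X]) (n : ι → ℕ) (h : ∀ i ∈ s, (f i).natDegree ≤ n i) :
    (∏ i ∈ s, f i).coeff (∑ i ∈ s, n i) = ∏ i ∈ s, (f i).coeff (n i) := by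
  classical
  induction s using Finset.induction_on with
  | empty => simp
  | insert a s ha ih =>
    have hs : ∀ i ∈ s, (f i).natDegree ≤ n i := fun i hi => h i (mem_insert_of_mem hi)
    rw [prod_insert ha, sum_insert ha, prod_insert ha,
      coeff_mul_add_eq_of_natDegree_le (h a (mem_insert_self a s))
        ((natDegree_prod_le _ _).trans (sum_le_sum hs)), ih hs]

variable {R ι : Type*} [CommRing R] [Fintype ι] [DecidableEq ι]

theorem coeff_det_sum_of_natDegree_le (M : Matrix ι ι R[X]) (n : ι → ℕ)
    (h : ∀ i j, (M i j).natDegree ≤ n j) :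
    M.det.coeff (∑ j, n j) = (Matrix.of fun i j => (M i j).coeff (n j)).det := by
  simp only [Matrix.det_apply, finsetSum_coeff, Units.smul_def, coeff_smul, Matrix.of_apply]
  refine sum_congr rfl fun σ _ => ?_
  rw [coeff_prod_sum_of_natDegree_le univ (fun i => M (σ i) i) n fun i _ => h _ _]

theorem natDegree_det_le_sum (M : Matrix ι ι R[X]) (n : ι → ℕ)
    (h : ∀ i j, (M i j).natDegree ≤ n j) : M.det.natDegree ≤ ∑ j, n j := by
  rw [Matrix.det_apply]
  refine natDegree_sum_le_of_forall_le _ _ fun σ _ => ?_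
  rw [Units.smul_def]
  exact (natDegree_smul_le _ _).trans
    ((natDegree_prod_le _ _).trans (sum_le_sum fun i _ => h _ _))

end PolynomialDeterminants

section ZeroEstimate

variable {R ι : Type*} [CommRing R] [IsDomain R] [Fintype ι]

theorem det_pow_equivFin_ne_zero [DecidableEq ι] {v : ι → R} (hv : Function.Injective v)
    (e : ι ≃ Fin (Fintype.card ι)) :
    (Matrix.of fun j l => v l ^ (e j : ℕ)).det ≠ 0 := by
  have h := Matrix.det_vandermonde_ne_zero_iff.2 (hv.comp e.symm.injective)
  rw [← Matrix.det_transpose, ← Matrix.det_submatrix_equiv_self e] at h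
  convert h using 2
  ext j l
  simp [Matrix.vandermonde]

theorem det_C_pow_mul_taylor_ne_zero [DecidableEq ι] {v : ι → R} (hv : Function.Injective v)
    {P : ι → R[X]} (hP : ∀ l, P l ≠ 0) (e : ι ≃ Fin (Fintype.card ι)) :
    (Matrix.of fun j l => C (v l ^ (e j : ℕ)) * taylor ((e j : ℕ) : R) (P l)).det ≠ 0 := by
  intro h0
  have htop := coeff_det_sum_of_natDegree_le
    (Matrix.of fun j l => C (v l ^ (e j : ℕ)) * taylor ((e j : ℕ) : R) (P l))
    (fun l => (P l).natDegree)
    fun j l => (natDegree_C_mul_le _ _).trans (natDegree_taylor _ _).le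
  simp only [h0, coeff_zero, Matrix.of_apply, coeff_C_mul, coeff_taylor_natDegree] at htop
  simp_rw [mul_comm _ (leadingCoeff _)] at htop
  have hfactor := Matrix.det_mul_row (fun l => (P l).leadingCoeff)
    (Matrix.of fun j l => v l ^ (e j : ℕ))
  simp only [Matrix.of_apply] at hfactor
  rw [hfactor] at htop
  exact mul_ne_zero (prod_ne_zero_iff.2 fun l _ => leadingCoeff_ne_zero.2 (hP l))
    (det_pow_equivFin_ne_zero hv e) htop.symm

/- A zero at `x, x + 1, …, x + #ι - 1` makes `x` a root of the determinant of the shifted system,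
a nonzero polynomial of degree at most `∑ l, (P l).natDegree`. -/
theorem card_le_sum_natDegree_of_sum_eq_zero {v : ι → R} (hv : Function.Injective v)
    {P : ι → R[X]} (hP : ∀ l, P l ≠ 0) (S : Finset R)
    (h : ∀ x ∈ S, ∃ w : ι → R, w ≠ 0 ∧
      ∀ j < Fintype.card ι, ∑ l, v l ^ j * (P l).eval (x + j) * w l = 0) :
    #S ≤ ∑ l, (P l).natDegree := by
  classical
  let e := Fintype.equivFin ι
  set M : Matrix ι ι R[X] :=
    Matrix.of fun j l => C (v l ^ (e j : ℕ)) * taylor ((e j : ℕ) : R) (P l) with hM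
  have hdeg : M.det.natDegree ≤ ∑ l, (P l).natDegree :=
    natDegree_det_le_sum M _ fun j l =>
      (natDegree_C_mul_le _ _).trans (natDegree_taylor _ _).le
  have hroot : ∀ x ∈ S, M.det.eval x = 0 := by
    intro x hx
    obtain ⟨w, hw, hsum⟩ := h x hx
    have heval : M.det.eval x = (M.map (eval x)).det := by
      simpa using RingHom.map_det (evalRingHom x) M
    rw [heval]
    refine Matrix.exists_mulVec_eq_zero_iff.1 ⟨w, hw, funext fun j => ?_⟩
    simpa [Matrix.mulVec, dotProduct, hM, taylor_eval] using hsum (e j) (e j).2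
  exact (card_le_degree_of_subset_roots
    (fun x hx => (mem_roots (det_C_pow_mul_taylor_ne_zero hv hP e)).2 (hroot x hx))).trans hdeg

theorem eq_zero_of_sum_natDegree_lt_card {v : ι → R} (hv : Function.Injective v)
    {P : ι → R[X]} {S : Finset R} (hS : ∑ l, (P l).natDegree < #S)
    (h : ∀ x ∈ S, ∃ w : ι → R, (∀ l, w l ≠ 0) ∧
      ∀ j < Fintype.card ι, ∑ l, v l ^ j * (P l).eval (x + j) * w l = 0) : P = 0 := by
  classical
  by_contra hP
  obtain ⟨l₀, hl₀⟩ := Function.ne_iff.1 hP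
  have hle := card_le_sum_natDegree_of_sum_eq_zero (ι := {l // P l ≠ 0})
    (hv.comp Subtype.val_injective) Subtype.prop S fun x hx => by
      obtain ⟨w, hw, hzero⟩ := h x hx
      refine ⟨fun l => w l, fun h0 => hw l₀ (congrFun h0 ⟨l₀, hl₀⟩), fun j hj => ?_⟩
      rw [← hzero j (hj.trans_le (Fintype.card_subtype_le _))]
      exact Fintype.sum_of_injective _ Subtype.val_injective _ _
        (fun l hl => by simp [show P l = 0 by simpa using hl]) fun _ => rfl
  refine hS.not_ge (hle.trans_eq ?_)
  exact Fintype.sum_of_injective _ Subtype.val_injective _ _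
    (fun l hl => by simp [show P l = 0 by simpa using hl]) fun _ => rfl

/-- The monomial `x ^ a * y ^ l` for `i = (a, l)`: bivariate polynomials of degree less than `K` in
`x` and less than `L` in `y` are the linear combinations of these. -/
def bivariateMonomial {R : Type*} [CommSemiring R] {K L : ℕ} (x y : R) (i : Fin K × Fin L) : R :=
  x ^ (i.1 : ℕ) * y ^ (i.2 : ℕ)

theorem injOn_natCast_sub_mul {R : Type*} [Ring R] [CharZero R] (q : ℕ) :
    Set.InjOn (fun rs : ℕ × ℕ => (rs.1 : R) - rs.2 * q) {rs | rs.1 < q} := by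
  rintro ⟨r, s⟩ hr ⟨r', s'⟩ hr' h
  simp only [Set.mem_ofPred_eq] at hr hr'
  have hadd : r + s' * q = r' + s * q := by
    have : (r : R) + s' * q = r' + s * q := by
      rw [← sub_eq_sub_iff_add_eq_add]; exact h
    exact_mod_cast this
  have hrr : r = r' := by
    simpa [Nat.mod_eq_of_lt hr, Nat.mod_eq_of_lt hr'] using congrArg (· % q) hadd
  subst hrr
  have hss : s' = s := Nat.eq_of_mul_eq_mul_right (Nat.zero_lt_of_lt hr) (by omega)
  rw [hss]

theorem eq_zero_of_forall_sum_mul_bivariateMonomial_eq_zero [CharZero R] {K L N S q : ℕ}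
    {θ₁ θ₂ : R} (h₁ : Function.Injective fun n : ℕ => θ₁ ^ n) (h₂ : θ₂ ≠ 0) (hq : N ≤ q)
    (hcard : K * L < N * S) {p : Fin K × Fin L → R}
    (hp : ∀ r < N + L, ∀ s < S,
      ∑ i, p i * bivariateMonomial ((r : R) - s * q) (θ₁ ^ r * θ₂ ^ s) i = 0) : p = 0 := by
  classical
  have h₁' : θ₁ ≠ 0 := fun h => absurd (@h₁ 1 2 (by simp [h])) (by norm_num)
  let P : Fin L → R[X] := fun l => ∑ a : Fin K, monomial (a : ℕ) (p (a, l))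
  have hPeval (l : Fin L) (x : R) : (P l).eval x = ∑ a : Fin K, p (a, l) * x ^ (a : ℕ) := by
    simp [P, eval_finsetSum]
  have hPdeg : ∑ l, (P l).natDegree ≤ K * L := by
    have hdeg (l : Fin L) : (P l).natDegree ≤ K :=
      natDegree_sum_le_of_forall_le _ _ fun a _ => (natDegree_monomial_le _).trans a.2.le
    simpa [mul_comm] using sum_le_card_nsmul univ _ K fun l _ => hdeg l
  let S' : Finset R := (range N ×ˢ range S).image fun rs => (rs.1 : R) - rs.2 * q
  have hS' : #S' = N * S := by
    rw [card_image_of_injOn ((injOn_natCast_sub_mul q).mono ?_), card_product, card_range,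
      card_range]
    rintro rs hrs
    exact (mem_range.1 (mem_product.1 hrs).1).trans_le hq
  have hP : P = 0 := by
    refine eq_zero_of_sum_natDegree_lt_card (v := fun l : Fin L => θ₁ ^ (l : ℕ))
      (h₁.comp Fin.val_injective) (hPdeg.trans_lt (hS' ▸ hcard)) fun x hx => ?_
    obtain ⟨⟨r, s⟩, hrs, rfl⟩ := mem_image.1 hx
    obtain ⟨hr, hs⟩ : r < N ∧ s < S := by simpa using hrs
    refine ⟨fun l => (θ₁ ^ r * θ₂ ^ s) ^ (l : ℕ), fun l => by simp [h₁', h₂], fun j hj => ?_⟩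
    rw [Fintype.card_fin] at hj
    rw [← hp (r + j) (by omega) s hs, Fintype.sum_prod_type_right]
    refine sum_congr rfl fun l _ => ?_
    rw [hPeval, mul_sum, sum_mul]
    refine sum_congr rfl fun a _ => ?_
    simp only [bivariateMonomial]
    push_cast
    ring
  funext ⟨a, l⟩
  have hcoeff : (P l).coeff a = p (a, l) := by
    simp [P, coeff_monomial, Fin.val_inj]
  rw [← hcoeff, hP]
  simp

theorem exists_det_ne_zero_of_forall_eq_zero {F ι π : Type*} [Field F] [Fintype ι]
    [DecidableEq ι] (v : π → ι → F) (h : ∀ p : ι → F, (∀ x, ∑ i, p i * v x i = 0) → p = 0) :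
    ∃ f : ι → π, (Matrix.of fun i j => v (f i) j).det ≠ 0 := by
  have hspan : Submodule.span F (Set.range v) = ⊤ := by
    by_contra hne
    obtain ⟨g, hg, hle⟩ := Submodule.exists_le_ker_of_lt_top _ (lt_top_iff_ne_top.2 hne)
    have hcoord := h (fun i => g (Pi.single i 1)) fun x => by
      have hgx : g (v x) = 0 := hle (Submodule.subset_span ⟨x, rfl⟩)
      rw [pi_eq_sum_univ' (v x)] at hgx
      simpa [mul_comm] using hgx
    exact hg (LinearMap.pi_ext' fun i => LinearMap.ext_ring (congrFun hcoord i))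
  obtain ⟨κ, a, -, hs, hli⟩ := exists_linearIndependent' F v
  let e := (Pi.basisFun F ι).indexEquiv (Module.Basis.mk hli (hs.trans hspan).ge)
  refine ⟨fun i => a (e i), ?_⟩
  have hrows : LinearIndependent F (Matrix.of fun i j => v (a (e i)) j).row :=
    hli.comp e e.injective
  exact ((Matrix.isUnit_iff_isUnit_det _).1
    (Matrix.linearIndependent_rows_iff_isUnit.1 hrows)).ne_zero

end ZeroEstimate

section LowRankDeterminants

variable {ι : Type*} [Fintype ι] [DecidableEq ι]

theorem norm_det_le_factorial_mul_prod {𝕜 : Type*} [NormedField 𝕜] (M : Matrix ι ι 𝕜) (b : ι → ℝ)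
    (h : ∀ i j, ‖M i j‖ ≤ b i) : ‖M.det‖ ≤ (Fintype.card ι).factorial * ∏ i, b i := by
  rw [← Matrix.det_transpose, Matrix.det_apply]
  have hterm (σ : Equiv.Perm ι) :
      ‖Equiv.Perm.sign σ • ∏ i, M.transpose (σ i) i‖ ≤ ∏ i, b i := by
    have hsign : ‖Equiv.Perm.sign σ • ∏ i, M.transpose (σ i) i‖ =
        ‖∏ i, M.transpose (σ i) i‖ := by
      rcases Int.units_eq_one_or (Equiv.Perm.sign σ) with h | h <;> simp [h]
    rw [hsign, norm_prod]
    exact prod_le_prod (fun _ _ => norm_nonneg _) fun i _ => h _ _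
  refine (norm_sum_le_of_le _ fun σ _ => hterm σ).trans_eq ?_
  rw [sum_const, nsmul_eq_mul, card_univ, Fintype.card_perm]

theorem det_eq_zero_of_forall_eq_eval {F : Type*} [Field F] {M : Matrix ι ι F} {n : ℕ}
    {s : Finset ι} (hs : n < #s) {p : ι → F[X]} (hp : ∀ i, (p i).natDegree < n) (x : ι → F)
    (hM : ∀ i ∈ s, ∀ j, M i j = (p i).eval (x j)) : M.det = 0 := by
  have hdep : ¬ LinearIndepOn F (fun i => fun c : Fin n => (p i).coeff c) (s : Set ι) := by
    intro hli
    have := hli.fintype_card_le_finrank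
    simp at this
    omega
  rw [linearIndepOn_finset_iff] at hdep
  push Not at hdep
  obtain ⟨g, hg, i₀, hi₀, hgi₀⟩ := hdep
  refine Matrix.exists_vecMul_eq_zero_iff.1 ⟨fun i => if i ∈ s then g i else 0,
    fun h => hgi₀ (by simpa [hi₀] using congrFun h i₀), funext fun j => ?_⟩
  have hcoeff (c : Fin n) : ∑ i ∈ s, g i * (p i).coeff c = 0 := by
    simpa using congrFun hg c
  calc ∑ i, (if i ∈ s then g i else 0) * M i j
      = ∑ i ∈ s, g i * ∑ c : Fin n, (p i).coeff c * x j ^ (c : ℕ) := by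
        simp only [ite_mul, zero_mul, sum_ite_mem, univ_inter]
        refine sum_congr rfl fun i hi => ?_
        rw [hM i hi, eval_eq_sum_range' (hp i), sum_range]
    _ = ∑ c : Fin n, (∑ i ∈ s, g i * (p i).coeff c) * x j ^ (c : ℕ) := by
        simp_rw [mul_sum, sum_mul, mul_assoc]
        exact sum_comm
    _ = 0 := sum_eq_zero fun c _ => by rw [hcoeff, zero_mul]

/- Expand along the rows: a term taking more than `n` rows of the low-rank part vanishes, and every
other term has at least `#ι - n` small rows. -/
theorem norm_det_eval_add_le {𝕜 : Type*} [NormedField 𝕜] {n : ℕ} (hn : n ≤ Fintype.card ι)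
    (x : ι → 𝕜) {p : ι → 𝕜[X]} (hp : ∀ i, (p i).natDegree < n) (E : Matrix ι ι 𝕜) {B ε : ℝ}
    (hε₀ : 0 ≤ ε) (hεB : ε ≤ B) (hB : ∀ i j, ‖(p i).eval (x j)‖ ≤ B)
    (hε : ∀ i j, ‖E i j‖ ≤ ε) :
    ‖(Matrix.of fun i j => (p i).eval (x j) + E i j).det‖ ≤
      2 ^ Fintype.card ι * ((Fintype.card ι).factorial *
        (B ^ n * ε ^ (Fintype.card ι - n))) := by
  classical
  have hB₀ : 0 ≤ B := hε₀.trans hεB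
  let P : Matrix ι ι 𝕜 := Matrix.of fun i j => (p i).eval (x j)
  have hexpand : (Matrix.of fun i j => (p i).eval (x j) + E i j).det =
      ∑ s : Finset ι, (Matrix.of (s.piecewise P E)).det :=
    (Matrix.detRowAlternating (R := 𝕜) (n := ι)).toMultilinearMap.map_add_univ P E
  have hterm (s : Finset ι) : ‖(Matrix.of (s.piecewise P E)).det‖ ≤
      (Fintype.card ι).factorial * (B ^ n * ε ^ (Fintype.card ι - n)) := by
    rcases lt_or_ge n #s with hs | hs
    · rw [det_eq_zero_of_forall_eq_eval hs hp x fun i hi j => by simp [piecewise, hi, P],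
        norm_zero]
      positivity
    · refine (norm_det_le_factorial_mul_prod _ (s.piecewise (fun _ => B) fun _ => ε)
        fun i j => ?_).trans ?_
      · by_cases hi : i ∈ s <;> simp [piecewise, hi, P, hB, hε]
      rw [prod_piecewise, univ_inter, prod_const, prod_const, ← compl_eq_univ_sdiff, card_compl]
      refine mul_le_mul_of_nonneg_left ?_ (by positivity)
      calc B ^ #s * ε ^ (Fintype.card ι - #s)
          = B ^ #s * (ε ^ (n - #s) * ε ^ (Fintype.card ι - n)) := by
            rw [← pow_add, add_comm (n - #s), tsub_add_tsub_cancel hn hs]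
        _ ≤ B ^ #s * (B ^ (n - #s) * ε ^ (Fintype.card ι - n)) := by gcongr
        _ = B ^ n * ε ^ (Fintype.card ι - n) := by
            rw [← mul_assoc, ← pow_add, Nat.add_sub_cancel' hs]
  rw [hexpand]
  refine (norm_sum_le_of_le _ fun s _ => hterm s).trans_eq ?_
  rw [sum_const, nsmul_eq_mul, card_univ, Fintype.card_finset]
  push_cast
  rfl

end LowRankDeterminants

section TaylorExpansion

variable {y δ Y : ℝ} {J : ℕ}

theorem abs_exp_sub_sum_le (h : 8 * |y| ≤ J) :
    |Real.exp y - ∑ m ∈ range J, y ^ m / m.factorial| ≤ 2 * Real.exp (-J) := by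
  have he2 : Real.exp 2 ≤ 8 := by
    have h2 : Real.exp 2 = Real.exp 1 * Real.exp 1 := by rw [← Real.exp_add]; norm_num
    nlinarith [Real.exp_one_lt_d9, Real.exp_pos 1]
  have hratio : ‖(y : ℂ)‖ / (J.succ : ℝ) ≤ 1 / 2 := by
    rw [Complex.norm_real, Real.norm_eq_abs, div_le_iff₀ (by positivity)]
    push_cast
    linarith [abs_nonneg y]
  have htail : |Real.exp y - ∑ m ∈ range J, y ^ m / m.factorial| ≤
      |y| ^ J / J.factorial * 2 := by
    have h := Complex.exp_bound' hratio
    rw [Complex.norm_real, Real.norm_eq_abs] at h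
    refine le_of_eq_of_le ?_ h
    rw [← Real.norm_eq_abs, ← Complex.norm_real]
    push_cast
    rfl
  have hterm : |y| ^ J / J.factorial ≤ Real.exp (-J) := by
    have hexp := (Real.pow_div_factorial_le_exp (Real.exp 2 * |y|) (by positivity) J).trans
      (Real.exp_le_exp.2 (by nlinarith [abs_nonneg y] : Real.exp 2 * |y| ≤ J))
    have hJ : Real.exp 2 ^ J = Real.exp J * Real.exp J := by
      rw [← Real.exp_nat_mul, ← Real.exp_add]; ring_nf
    rw [mul_pow, hJ, mul_assoc, mul_div_assoc, mul_le_iff_le_one_right (Real.exp_pos _),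
      mul_div_assoc] at hexp
    rwa [Real.exp_neg, ← one_div, le_div_iff₀' (Real.exp_pos _)]
  linarith

theorem abs_sum_pow_div_factorial_le_exp (hy : |y| ≤ Y) (J : ℕ) :
    |∑ m ∈ range J, y ^ m / m.factorial| ≤ Real.exp Y := by
  refine (abs_sum_le_sum_abs _ _).trans
    (le_trans ?_ (Real.sum_le_exp_of_nonneg ((abs_nonneg y).trans hy) J))
  refine sum_le_sum fun m _ => ?_
  rw [abs_div, abs_pow, Nat.abs_cast]
  gcongr

theorem abs_exp_add_sub_sum_le (hy : |y| ≤ Y) (hJ : 8 * Y ≤ J)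
    (hδ : |δ| * Real.exp Y ≤ Real.exp (-J)) :
    |Real.exp (y + δ) - ∑ m ∈ range J, y ^ m / m.factorial| ≤ 4 * Real.exp (-J) := by
  have hexpY : 1 ≤ Real.exp Y := Real.one_le_exp ((abs_nonneg y).trans hy)
  have hexpJ : Real.exp (-J) ≤ 1 := Real.exp_le_one_iff.2 (neg_nonpos.2 J.cast_nonneg)
  have hδ₁ : |δ| ≤ 1 := by nlinarith [abs_nonneg δ]
  have hperturb : |Real.exp y * (Real.exp δ - 1)| ≤ 2 * Real.exp (-J) := by
    rw [abs_mul, Real.abs_exp]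
    calc Real.exp y * |Real.exp δ - 1| ≤ Real.exp Y * (2 * |δ|) := by
          gcongr
          · exact (le_abs_self y).trans hy
          · exact Real.abs_exp_sub_one_le hδ₁
      _ ≤ 2 * Real.exp (-J) := by linarith
  have htaylor := abs_exp_sub_sum_le (y := y) (J := J) (by linarith)
  calc |Real.exp (y + δ) - ∑ m ∈ range J, y ^ m / m.factorial|
      = |Real.exp y * (Real.exp δ - 1) + (Real.exp y - ∑ m ∈ range J, y ^ m / m.factorial)| := by
        rw [Real.exp_add]; ring_nf
    _ ≤ _ := (abs_add_le _ _).trans (by linarith)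

end TaylorExpansion

section UpperBound

variable {K L J : ℕ} {η Δ Y Z : ℝ}

/- The polynomial is `x ^ a` times the Taylor polynomial of degree less than `J` of
`exp (l * η * x)`, where `i = (a, l)`. -/
theorem exists_polynomial_near_bivariateMonomial (hZ : 1 ≤ Z) (hY : L * |η| * Z ≤ Y)
    (hJ : 8 * Y ≤ J) (hΔ : L * Δ * Real.exp Y ≤ Real.exp (-J)) (i : Fin K × Fin L) :
    ∃ p : ℝ[X], p.natDegree < K + J ∧ ∀ x, |x| ≤ Z → |p.eval x| ≤ Z ^ K * Real.exp Y ∧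
      ∀ δ, |δ| ≤ Δ → |bivariateMonomial x (Real.exp (η * x + δ)) i - p.eval x| ≤
        Z ^ K * (4 * Real.exp (-J)) := by
  let T : ℝ[X] := ∑ m ∈ range J, monomial m ((i.2 * η) ^ m / m.factorial)
  have hTdeg : T.natDegree ≤ J := natDegree_sum_le_of_forall_le _ _ fun m hm =>
    (natDegree_monomial_le _).trans (mem_range.1 hm).le
  have hTeval (x : ℝ) : T.eval x = ∑ m ∈ range J, (i.2 * η * x) ^ m / m.factorial := by
    simp only [T, eval_finsetSum, eval_monomial]
    exact sum_congr rfl fun m _ => by rw [mul_pow _ x]; ring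
  have hl : ((i.2 : ℕ) : ℝ) ≤ L := by exact_mod_cast i.2.2.le
  refine ⟨X ^ (i.1 : ℕ) * T, ?_, fun x hx => ?_⟩
  · exact (natDegree_mul_le.trans (add_le_add (natDegree_X_pow_le _) hTdeg)).trans_lt
      (Nat.add_lt_add_right i.1.2 J)
  have hxpow : |x ^ (i.1 : ℕ)| ≤ Z ^ K := by
    rw [abs_pow]
    exact (pow_le_pow_left₀ (abs_nonneg _) hx _).trans (pow_le_pow_right₀ hZ i.1.2.le)
  have hy : |i.2 * η * x| ≤ Y := by
    rw [abs_mul, abs_mul, Nat.abs_cast]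
    exact le_trans (by gcongr) hY
  simp only [eval_mul, eval_pow, eval_X, hTeval]
  refine ⟨?_, fun δ hδ => ?_⟩
  · rw [abs_mul]
    gcongr
    exact abs_sum_pow_div_factorial_le_exp hy J
  · have hlδ : |i.2 * δ| * Real.exp Y ≤ Real.exp (-J) := by
      rw [abs_mul, Nat.abs_cast]
      exact le_trans (by gcongr) hΔ
    have hexp : Real.exp (η * x + δ) ^ (i.2 : ℕ) = Real.exp (i.2 * η * x + i.2 * δ) := by
      rw [← Real.exp_nat_mul]; ring_nf
    rw [bivariateMonomial, hexp, ← mul_sub, abs_mul]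
    gcongr
    exact abs_exp_add_sub_sum_le hy hJ hlδ

theorem abs_det_bivariateMonomial_le (hZ : 1 ≤ Z) (hY : L * |η| * Z ≤ Y) (hJ : 8 * Y ≤ J)
    (hΔ : L * Δ * Real.exp Y ≤ Real.exp (-J)) (hJ₂ : 2 ≤ J) (hKJ : K + J ≤ K * L)
    {x δ : Fin K × Fin L → ℝ} (hx : ∀ j, |x j| ≤ Z) (hδ : ∀ j, |δ j| ≤ Δ) :
    |(Matrix.of fun i j => bivariateMonomial (x j) (Real.exp (η * x j + δ j)) i).det| ≤
      2 ^ (K * L) * ((K * L).factorial *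
        ((Z ^ K * Real.exp Y) ^ (K + J) *
          (Z ^ K * (4 * Real.exp (-J))) ^ (K * L - (K + J)))) := by
  have hY₀ : 0 ≤ Y := le_trans (by positivity) hY
  have hexpJ : 4 * Real.exp (-J) ≤ Real.exp Y := by
    have hJ₂' : (2 : ℝ) ≤ J := by exact_mod_cast hJ₂
    have hexp : 4 ≤ Real.exp J := by
      nlinarith [Real.quadratic_le_exp_of_nonneg (by linarith : (0 : ℝ) ≤ J)]
    have hmul : Real.exp (-J) * Real.exp J = 1 := by rw [← Real.exp_add]; simp
    nlinarith [Real.one_le_exp hY₀, Real.exp_pos (-J)]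
  choose p hpdeg hp using exists_polynomial_near_bivariateMonomial (K := K) hZ hY hJ hΔ
  simpa using norm_det_eval_add_le (by simpa using hKJ) x hpdeg
    (Matrix.of fun i j => bivariateMonomial (x j) (Real.exp (η * x j + δ j)) i - (p i).eval (x j))
    (B := Z ^ K * Real.exp Y) (ε := Z ^ K * (4 * Real.exp (-J))) (by positivity) (by gcongr)
    (fun i j => (hp i (x j) (hx j)).1) fun i j => (hp i (x j) (hx j)).2 (δ j) (hδ j)

theorem log_abs_det_bivariateMonomial_le (hZ : 1 ≤ Z) (hY : L * |η| * Z ≤ Y) (hJ : 8 * Y ≤ J)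
    (hΔ : L * Δ * Real.exp Y ≤ Real.exp (-J)) (hJ₂ : 2 ≤ J) (hKJ : 2 * (K + J) = K * L)
    {x δ : Fin K × Fin L → ℝ} (hx : ∀ j, |x j| ≤ Z) (hδ : ∀ j, |δ j| ≤ Δ)
    (hdet : (Matrix.of fun i j =>
      bivariateMonomial (x j) (Real.exp (η * x j + δ j)) i).det ≠ 0) :
    Real.log |(Matrix.of fun i j => bivariateMonomial (x j) (Real.exp (η * x j + δ j)) i).det| ≤
      (K * L) * (2 * Real.log 2 + Real.log (K * L) + K * Real.log Z + (Y - J) / 2) := by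
  have hZ₀ : 0 < Z := by linarith
  have hKL : K * L - (K + J) = K + J := by omega
  have hhalf : (K + J : ℝ) = K * L / 2 := by
    rw [eq_div_iff two_ne_zero, mul_comm]; exact_mod_cast hKJ
  have hKL₀ : (0 : ℝ) < K * L := by exact_mod_cast (by omega : 0 < K * L)
  have hlog : Real.log (Z ^ K * Real.exp Y * (Z ^ K * (4 * Real.exp (-J)))) =
      2 * (K * Real.log Z) + 2 * Real.log 2 + (Y - J) := by
    rw [show Z ^ K * Real.exp Y * (Z ^ K * (4 * Real.exp (-J))) =
        (Z ^ K) ^ 2 * 2 ^ 2 * Real.exp (Y - J) by rw [sub_eq_add_neg, Real.exp_add]; ring,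
      Real.log_mul (by positivity) (by positivity), Real.log_mul (by positivity) (by positivity),
      Real.log_exp, Real.log_pow, Real.log_pow, Real.log_pow]
    push_cast
    ring
  have hfac : ((K * L).factorial : ℝ) ≤ (K * L : ℝ) ^ (K * L) := by
    exact_mod_cast Nat.factorial_le_pow (K * L)
  refine (Real.log_le_log (abs_pos.2 hdet)
    ((abs_det_bivariateMonomial_le hZ hY hJ hΔ hJ₂ (by omega) hx hδ).trans
      (by gcongr : _ ≤ 2 ^ (K * L) * ((K * L : ℝ) ^ (K * L) * ((Z ^ K * Real.exp Y) ^ (K + J) *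
          (Z ^ K * (4 * Real.exp (-J))) ^ (K * L - (K + J))))))).trans_eq ?_
  rw [hKL, ← mul_pow, Real.log_mul (by positivity) (by positivity),
    Real.log_mul (pow_ne_zero _ hKL₀.ne') (by positivity), Real.log_pow, Real.log_pow,
    Real.log_pow, hlog]
  push_cast
  rw [hhalf]
  ring

end UpperBound

section Heights

variable {F : Type*} [Field F]

/-- `θ` is a quotient of algebraic integers all of whose complex conjugates have absolute value at
most `exp H`; this is a bound for the logarithmic height of `θ` that is stable under products and
inverses and provides a denominator of controlled size. -/
def HasHeightBound [CharZero F] (θ : F) (H : ℝ) : Prop :=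
  ∃ u d : F, IsIntegral ℤ u ∧ IsIntegral ℤ d ∧ d ≠ 0 ∧ θ = u / d ∧
    ∀ σ : F →ₐ[ℚ] ℂ, ‖σ u‖ ≤ Real.exp H ∧ ‖σ d‖ ≤ Real.exp H

namespace HasHeightBound

variable [CharZero F] {θ θ' : F} {H H' : ℝ}

theorem mono (h : HasHeightBound θ H) (hH : H ≤ H') : HasHeightBound θ H' := by
  obtain ⟨u, d, hu, hd, hd₀, hθ, hσ⟩ := h
  have hexp := Real.exp_le_exp.2 hH
  exact ⟨u, d, hu, hd, hd₀, hθ, fun σ => ⟨(hσ σ).1.trans hexp, (hσ σ).2.trans hexp⟩⟩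

theorem mul (h : HasHeightBound θ H) (h' : HasHeightBound θ' H') :
    HasHeightBound (θ * θ') (H + H') := by
  obtain ⟨u, d, hu, hd, hd₀, rfl, hσ⟩ := h
  obtain ⟨u', d', hu', hd', hd'₀, rfl, hσ'⟩ := h'
  refine ⟨u * u', d * d', hu.mul hu', hd.mul hd', mul_ne_zero hd₀ hd'₀,
    div_mul_div_comm .., fun σ => ?_⟩
  simp only [map_mul, norm_mul, Real.exp_add]
  exact ⟨mul_le_mul (hσ σ).1 (hσ' σ).1 (norm_nonneg _) (Real.exp_pos _).le,
    mul_le_mul (hσ σ).2 (hσ' σ).2 (norm_nonneg _) (Real.exp_pos _).le⟩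

theorem inv (h : HasHeightBound θ H) (hθ₀ : θ ≠ 0) : HasHeightBound θ⁻¹ H := by
  obtain ⟨u, d, hu, hd, -, rfl, hσ⟩ := h
  exact ⟨d, u, hd, hu, (div_ne_zero_iff.1 hθ₀).1, inv_div u d, fun σ => (hσ σ).symm⟩

theorem pow (h : HasHeightBound θ H) (n : ℕ) : HasHeightBound (θ ^ n) (n * H) := by
  obtain ⟨u, d, hu, hd, hd₀, rfl, hσ⟩ := h
  refine ⟨u ^ n, d ^ n, hu.pow n, hd.pow n, pow_ne_zero n hd₀, div_pow u d n, fun σ => ?_⟩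
  simp only [map_pow, norm_pow, Real.exp_nat_mul]
  exact ⟨pow_le_pow_left₀ (norm_nonneg _) (hσ σ).1 n,
    pow_le_pow_left₀ (norm_nonneg _) (hσ σ).2 n⟩

theorem zpow (h : HasHeightBound θ H) (hθ₀ : θ ≠ 0) (n : ℤ) :
    HasHeightBound (θ ^ n) (n.natAbs * H) := by
  obtain ⟨m, rfl | rfl⟩ := n.eq_nat_or_neg
  · simpa using h.pow m
  · simpa using (h.pow m).inv (pow_ne_zero m hθ₀)

theorem of_isIntegral (hθ : IsIntegral ℤ θ) (hH : 0 ≤ H)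
    (hσ : ∀ σ : F →ₐ[ℚ] ℂ, ‖σ θ‖ ≤ Real.exp H) : HasHeightBound θ H :=
  ⟨θ, 1, hθ, isIntegral_one, one_ne_zero, (div_one θ).symm,
    fun σ => ⟨hσ σ, by simpa using hH⟩⟩

theorem natCast (n : ℕ) : HasHeightBound (n : F) (Real.log n) :=
  of_isIntegral (by simpa using isIntegral_algebraMap (R := ℤ) (A := F) (x := n))
    (Real.log_natCast_nonneg n) fun σ => by
      rw [map_natCast, Complex.norm_natCast]
      exact Real.le_exp_log n

/- Multiplying by the `b`-th power of the denominator makes all powers up to `θ ^ b` integral. -/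
theorem exists_common_denominator (h : HasHeightBound θ H) (b : ℕ) :
    ∃ w : F, w ≠ 0 ∧ ∀ a ≤ b, IsIntegral ℤ (w * θ ^ a) ∧
      ∀ σ : F →ₐ[ℚ] ℂ, ‖σ (w * θ ^ a)‖ ≤ Real.exp (b * H) := by
  obtain ⟨u, d, hu, hd, hd₀, rfl, hσ⟩ := h
  refine ⟨d ^ b, pow_ne_zero b hd₀, fun a hab => ?_⟩
  have hclear : d ^ b * (u / d) ^ a = u ^ a * d ^ (b - a) := by
    rw [div_pow, pow_sub₀ d hd₀ hab]
    field_simp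
  refine ⟨hclear ▸ (hu.pow a).mul (hd.pow (b - a)), fun σ => ?_⟩
  rw [hclear, map_mul, map_pow, map_pow, norm_mul, norm_pow, norm_pow]
  calc ‖σ u‖ ^ a * ‖σ d‖ ^ (b - a) ≤ Real.exp H ^ a * Real.exp H ^ (b - a) := by
        gcongr
        exacts [(hσ σ).1, (hσ σ).2]
    _ = Real.exp (b * H) := by rw [← pow_add, Nat.add_sub_cancel' hab, Real.exp_nat_mul]

end HasHeightBound

end Heights

section Liouville

variable {F : Type*} [Field F] [NumberField F]

theorem one_le_norm_mul_pow_finrank_sub_one {x : F} (hx : IsIntegral ℤ x) (hx₀ : x ≠ 0)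
    {B : ℝ} (hB : ∀ σ : F →ₐ[ℚ] ℂ, ‖σ x‖ ≤ B) (σ₀ : F →ₐ[ℚ] ℂ) :
    1 ≤ ‖σ₀ x‖ * B ^ (Module.finrank ℚ F - 1) := by
  classical
  obtain ⟨z, hz⟩ := IsIntegrallyClosed.isIntegral_iff.1 (Algebra.isIntegral_norm ℚ hx)
  have hz₀ : z ≠ 0 := by
    rintro rfl
    rw [map_zero] at hz
    exact Algebra.norm_ne_zero_iff.2 hx₀ hz.symm
  have hnorm : 1 ≤ ‖algebraMap ℚ ℂ (Algebra.norm ℚ x)‖ := by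
    rw [← hz]
    simpa using (by exact_mod_cast Int.one_le_abs hz₀ : (1 : ℝ) ≤ |(z : ℝ)|)
  rw [Algebra.norm_eq_prod_embeddings ℚ ℂ, norm_prod,
    ← mul_prod_erase _ _ (mem_univ σ₀)] at hnorm
  refine hnorm.trans ?_
  gcongr
  refine (prod_le_prod (fun σ _ => norm_nonneg _) fun σ _ => hB σ).trans_eq ?_
  rw [prod_const, card_erase_of_mem (mem_univ _), card_univ, AlgHom.card]

theorem one_le_norm_det_mul_pow {ι : Type*} [Fintype ι] [DecidableEq ι] {M : Matrix ι ι F}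
    (hint : ∀ i j, IsIntegral ℤ (M i j)) (hdet : M.det ≠ 0) {b : ℝ}
    (hb : ∀ (σ : F →ₐ[ℚ] ℂ) i j, ‖σ (M i j)‖ ≤ b) (σ₀ : F →ₐ[ℚ] ℂ) :
    1 ≤ ‖σ₀ M.det‖ *
      ((Fintype.card ι).factorial * b ^ Fintype.card ι) ^ (Module.finrank ℚ F - 1) := by
  refine one_le_norm_mul_pow_finrank_sub_one (IsIntegral.det hint) hdet (fun σ => ?_) σ₀
  rw [AlgHom.map_det]
  simpa using norm_det_le_factorial_mul_prod (σ.mapMatrix M) (fun _ => b) (hb σ)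

theorem neg_le_log_norm_det {ι : Type*} [Fintype ι] [DecidableEq ι] {M : Matrix ι ι F} {w : F}
    (hint : ∀ i j, IsIntegral ℤ (w * M i j)) (hw : w ≠ 0) (hdet : M.det ≠ 0)
    (σ₀ : F →ₐ[ℚ] ℂ) {W B : ℝ} (hW : ‖σ₀ w‖ ≤ Real.exp W)
    (hB : ∀ (σ : F →ₐ[ℚ] ℂ) i j, ‖σ (w * M i j)‖ ≤ Real.exp B) :
    -(Fintype.card ι * (W + (Module.finrank ℚ F - 1) * (Real.log (Fintype.card ι) + B))) ≤
      Real.log ‖σ₀ M.det‖ := by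
  set ρ := Fintype.card ι
  have hwdet : (w • M).det = w ^ ρ * M.det := Matrix.det_smul M w
  have hliouville := one_le_norm_det_mul_pow (M := w • M) hint
    (hwdet ▸ mul_ne_zero (pow_ne_zero _ hw) hdet) hB σ₀
  have hw' : ‖σ₀ w‖ ≠ 0 := by simpa using hw
  have hdet' : ‖σ₀ M.det‖ ≠ 0 := by simpa using hdet
  have hlog := Real.log_nonneg hliouville
  rw [hwdet, map_mul, map_pow, norm_mul, norm_pow, Real.log_mul (by positivity) (by positivity),
    Real.log_mul (by positivity) (by positivity), Real.log_pow, Real.log_pow,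
    Real.log_mul (by positivity) (by positivity), Real.log_pow, Real.log_exp,
    Nat.cast_sub Module.finrank_pos, Nat.cast_one] at hlog
  have hlogw : Real.log ‖σ₀ w‖ ≤ W := (Real.log_le_iff_le_exp (by positivity)).2 hW
  have hfactorial : Real.log ρ.factorial ≤ ρ * Real.log ρ := by
    rw [← Real.log_pow]
    exact Real.log_le_log (by positivity) (by exact_mod_cast ρ.factorial_le_pow)
  have hfinrank : (0 : ℝ) ≤ Module.finrank ℚ F - 1 :=
    sub_nonneg.2 (by exact_mod_cast Module.finrank_pos)
  have hconj := mul_le_mul_of_nonneg_left hfactorial hfinrank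
  have hdenom := mul_le_mul_of_nonneg_left hlogw ρ.cast_nonneg
  linarith

end Liouville

section InterpolationDeterminant

variable {F : Type*} [Field F] {K L R S q : ℕ} {θ₁ θ₂ : F}

/-- The matrix of values of the monomials `x ^ a * y ^ l`, `a < K`, `l < L`, at the points
`(r - s * q, θ₁ ^ r * θ₂ ^ s)`, where `(r, s)` runs over the values of `f`. When `log θ₂` is close
to `-q * log θ₁`, these points are close to the graph of `x ↦ θ₁ ^ x`. -/
def interpolationMatrix (q : ℕ) (θ₁ θ₂ : F) (f : Fin K × Fin L → Fin R × Fin S) :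
    Matrix (Fin K × Fin L) (Fin K × Fin L) F :=
  Matrix.of fun i j => bivariateMonomial (((f j).1 : ℕ) - ((f j).2 : ℕ) * q : F)
    (θ₁ ^ ((f j).1 : ℕ) * θ₂ ^ ((f j).2 : ℕ)) i

theorem exists_det_interpolationMatrix_ne_zero [CharZero F]
    (h₁ : Function.Injective fun n : ℕ => θ₁ ^ n) (h₂ : θ₂ ≠ 0) (hR : R ≤ q)
    (hcard : K * L < (R - L) * S) :
    ∃ f : Fin K × Fin L → Fin R × Fin S, (interpolationMatrix q θ₁ θ₂ f).det ≠ 0 := by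
  have hLR : L ≤ R := by
    by_contra! h
    simp [Nat.sub_eq_zero_of_le h.le] at hcard
  obtain ⟨f, hf⟩ := exists_det_ne_zero_of_forall_eq_zero
    (fun (rs : Fin R × Fin S) (i : Fin K × Fin L) =>
      bivariateMonomial ((rs.1 : ℕ) - (rs.2 : ℕ) * q : F) (θ₁ ^ (rs.1 : ℕ) * θ₂ ^ (rs.2 : ℕ)) i)
    fun p hp => eq_zero_of_forall_sum_mul_bivariateMonomial_eq_zero h₁ h₂
      ((Nat.sub_le R L).trans hR) hcard fun r hr s hs => hp (⟨r, by omega⟩, ⟨s, hs⟩)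
  exact ⟨f, by rw [← Matrix.det_transpose]; exact hf⟩

theorem abs_natCast_sub_natCast_mul_le {r s : ℕ} (hr : r ≤ q) (hs : s < S) :
    |(r : ℝ) - s * q| ≤ q * S := by
  have hr' : (r : ℝ) ≤ q := by exact_mod_cast hr
  have hs' : (s : ℝ) + 1 ≤ S := by exact_mod_cast hs
  have hsq : (s + 1 : ℝ) * q ≤ q * S := by rw [mul_comm]; gcongr
  rw [abs_le]
  constructor <;> nlinarith [r.cast_nonneg (α := ℝ), s.cast_nonneg (α := ℝ), q.cast_nonneg (α := ℝ)]

variable {H₁ H₂ : ℝ}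

theorem exists_interpolationMatrix_denominator [CharZero F] (hθ₁ : HasHeightBound θ₁ H₁)
    (hθ₂ : HasHeightBound θ₂ H₂) (hR : R ≤ q) (f : Fin K × Fin L → Fin R × Fin S) :
    ∃ w : F, w ≠ 0 ∧ (∀ σ : F →ₐ[ℚ] ℂ, ‖σ w‖ ≤ Real.exp (L * (R * H₁ + S * H₂))) ∧
      ∀ i j, IsIntegral ℤ (w * interpolationMatrix q θ₁ θ₂ f i j) ∧
        ∀ σ : F →ₐ[ℚ] ℂ, ‖σ (w * interpolationMatrix q θ₁ θ₂ f i j)‖ ≤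
          (q * S) ^ K * Real.exp (L * (R * H₁ + S * H₂)) := by
  obtain ⟨w₁, hw₁, h₁⟩ := hθ₁.exists_common_denominator (L * R)
  obtain ⟨w₂, hw₂, h₂⟩ := hθ₂.exists_common_denominator (L * S)
  have hexp : Real.exp (L * (R * H₁ + S * H₂)) =
      Real.exp ((L * R : ℕ) * H₁) * Real.exp ((L * S : ℕ) * H₂) := by
    rw [← Real.exp_add]; push_cast; ring_nf
  refine ⟨w₁ * w₂, mul_ne_zero hw₁ hw₂, fun σ => ?_, fun i j => ?_⟩
  · rw [map_mul, norm_mul, hexp]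
    have h₁σ := (h₁ 0 (Nat.zero_le _)).2 σ
    have h₂σ := (h₂ 0 (Nat.zero_le _)).2 σ
    rw [pow_zero, mul_one] at h₁σ h₂σ
    gcongr
  set x : ℤ := ((f j).1 : ℕ) - ((f j).2 : ℕ) * q with hx
  have hS : 0 < S := (Nat.zero_le _).trans_lt (f j).2.2
  have hentry : w₁ * w₂ * interpolationMatrix q θ₁ θ₂ f i j = (x : F) ^ (i.1 : ℕ) *
      ((w₁ * θ₁ ^ ((i.2 : ℕ) * (f j).1)) * (w₂ * θ₂ ^ ((i.2 : ℕ) * (f j).2))) := by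
    simp only [interpolationMatrix, bivariateMonomial, Matrix.of_apply, hx]
    push_cast
    ring
  obtain ⟨hint₁, hσ₁⟩ := h₁ ((i.2 : ℕ) * (f j).1) (Nat.mul_le_mul i.2.2.le (f j).1.2.le)
  obtain ⟨hint₂, hσ₂⟩ := h₂ ((i.2 : ℕ) * (f j).2) (Nat.mul_le_mul i.2.2.le (f j).2.2.le)
  have hintx : IsIntegral ℤ (x : F) := by
    simpa using isIntegral_algebraMap (R := ℤ) (A := F) (x := x)
  rw [hentry]
  refine ⟨(hintx.pow _).mul (hint₁.mul hint₂), fun σ => ?_⟩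
  have hxabs : |(x : ℝ)| ≤ q * S := by
    simpa [hx] using abs_natCast_sub_natCast_mul_le ((f j).1.2.le.trans hR) (f j).2.2
  have hqS : (1 : ℝ) ≤ q * S := by
    have hq : 0 < q := ((Nat.zero_le _).trans_lt (f j).1.2).trans_le hR
    exact_mod_cast Nat.mul_pos hq hS
  rw [map_mul, map_mul σ (w₁ * _), norm_mul, norm_mul, map_pow, map_intCast, norm_pow,
    Complex.norm_intCast, hexp]
  gcongr
  · exact (pow_le_pow_left₀ (abs_nonneg _) hxabs _).trans (pow_le_pow_right₀ hqS i.1.2.le)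
  · exact hσ₁ σ
  · exact hσ₂ σ

theorem neg_le_log_norm_det_interpolationMatrix [NumberField F] (hθ₁ : HasHeightBound θ₁ H₁)
    (hθ₂ : HasHeightBound θ₂ H₂) (hR : R ≤ q) (hqS : 0 < q * S) (σ₀ : F →ₐ[ℚ] ℂ)
    {f : Fin K × Fin L → Fin R × Fin S} (hdet : (interpolationMatrix q θ₁ θ₂ f).det ≠ 0) :
    -(K * L * (L * (R * H₁ + S * H₂) + (Module.finrank ℚ F - 1) *
        (Real.log (K * L) + K * Real.log (q * S) + L * (R * H₁ + S * H₂)))) ≤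
      Real.log ‖σ₀ (interpolationMatrix q θ₁ θ₂ f).det‖ := by
  obtain ⟨w, hw, hσw, hentries⟩ := exists_interpolationMatrix_denominator hθ₁ hθ₂ hR f
  have hqS' : (0 : ℝ) < q * S := by exact_mod_cast hqS
  have hlower := neg_le_log_norm_det (fun i j => (hentries i j).1) hw hdet σ₀ (hσw σ₀)
    (B := K * Real.log (q * S) + L * (R * H₁ + S * H₂)) fun σ i j => by
      rw [Real.exp_add, Real.exp_nat_mul, Real.exp_log hqS']
      exact (hentries i j).2 σ
  simpa [add_assoc] using hlower

theorem norm_det_interpolationMatrix (σ₀ : F →+* ℂ) {η Λ : ℝ}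
    (h₁ : σ₀ θ₁ = (Real.exp η : ℂ)) (h₂ : σ₀ θ₂ = (Real.exp (Λ - q * η) : ℂ))
    (f : Fin K × Fin L → Fin R × Fin S) :
    ‖σ₀ (interpolationMatrix q θ₁ θ₂ f).det‖ =
      |(Matrix.of fun i j => bivariateMonomial (((f j).1 : ℕ) - ((f j).2 : ℕ) * q : ℝ)
        (Real.exp (η * (((f j).1 : ℕ) - ((f j).2 : ℕ) * q) + ((f j).2 : ℕ) * Λ)) i).det| := by
  rw [← Real.norm_eq_abs, ← Complex.norm_real, RingHom.map_det, ← Complex.ofRealHom_eq_coe,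
    RingHom.map_det]
  congr 2
  ext i j
  have hexp : Real.exp (η * (((f j).1 : ℕ) - ((f j).2 : ℕ) * q) + ((f j).2 : ℕ) * Λ) =
      Real.exp η ^ ((f j).1 : ℕ) * Real.exp (Λ - q * η) ^ ((f j).2 : ℕ) := by
    rw [← Real.exp_nat_mul, ← Real.exp_nat_mul, ← Real.exp_add]
    ring_nf
  simp [interpolationMatrix, bivariateMonomial, h₁, h₂, hexp]

/- Here `η` is `log θ₁` and `Λ` is the linear form `log θ₂ + q * log θ₁`. -/
theorem exp_neg_lt_of_hasHeightBound [NumberField F] (σ₀ : F →ₐ[ℚ] ℂ)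
    (hθ₁ : HasHeightBound θ₁ H₁) (hθ₂ : HasHeightBound θ₂ H₂) {η Λ Y : ℝ} {J : ℕ}
    (h₁ : σ₀ θ₁ = (Real.exp η : ℂ)) (h₂ : σ₀ θ₂ = (Real.exp (Λ - q * η) : ℂ)) (hη : η ≠ 0)
    (hR : R ≤ q) (hcard : K * L < (R - L) * S) (hKJ : 2 * (K + J) = K * L) (hJ₂ : 2 ≤ J)
    (hY : L * |η| * (q * S) ≤ Y) (hJ : 8 * Y ≤ J)
    (hparam : Module.finrank ℚ F * (Real.log (K * L) + K * Real.log (q * S) +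
      L * (R * H₁ + S * H₂)) + 2 * Real.log 2 + (Y - J) / 2 < 0) :
    Real.exp (-J) < L * S * |Λ| * Real.exp Y := by
  by_contra! hΛ
  have hinj : Function.Injective fun n : ℕ => θ₁ ^ n := fun a b hab => by
    have hexp : Real.exp η ^ a = Real.exp η ^ b := by
      have := congrArg σ₀ hab
      simp only [map_pow, h₁] at this
      exact_mod_cast this
    rw [← Real.exp_nat_mul, ← Real.exp_nat_mul] at hexp
    exact_mod_cast mul_right_cancel₀ hη (Real.exp_injective hexp)
  have hθ₂₀ : θ₂ ≠ 0 := by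
    rintro rfl
    rw [map_zero] at h₂
    exact (Real.exp_pos _).ne (by exact_mod_cast h₂)
  obtain ⟨f, hf⟩ := exists_det_interpolationMatrix_ne_zero hinj hθ₂₀ hR hcard
  have hS : 0 < S := Nat.pos_of_ne_zero fun h => by simp [h] at hcard
  have hKL : 0 < K * L := by omega
  have hRL : 0 < R - L := Nat.pos_of_ne_zero fun h => by simp [h] at hcard
  have hqS : 0 < q * S := Nat.mul_pos (by omega) hS
  have hlower := neg_le_log_norm_det_interpolationMatrix hθ₁ hθ₂ hR hqS σ₀ hf
  have hnorm := norm_det_interpolationMatrix σ₀.toRingHom h₁ h₂ f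
  have hupper := log_abs_det_bivariateMonomial_le (Z := q * S) (Δ := S * |Λ|)
    (x := fun j => ((f j).1 : ℕ) - ((f j).2 : ℕ) * q) (δ := fun j => ((f j).2 : ℕ) * Λ)
    (by exact_mod_cast hqS) hY hJ (by rwa [← mul_assoc]) hJ₂ hKJ
    (fun j => abs_natCast_sub_natCast_mul_le ((f j).1.2.le.trans hR) (f j).2.2)
    (fun j => by
      rw [abs_mul, Nat.abs_cast]
      gcongr
      exact (f j).2.2.le)
    (by rw [← abs_ne_zero, ← hnorm]; simpa using hf)
  rw [← hnorm] at hupper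
  have hcontra := hlower.trans hupper
  have hKL' : (0 : ℝ) < K * L := by exact_mod_cast hKL
  have := mul_neg_of_pos_of_neg hKL' hparam
  linarith

end InterpolationDeterminant

section LinearFormInLogarithms

variable {F : Type*} [Field F] [NumberField F] {θ₁ θ₂ : F}

/- With `ρ = 880 * G ^ 3` the parameters of the interpolation determinant are `L = 40 * G ^ 2`,
`R = ρ * H₂`, `S = ρ * H₁` and `K = 20 * G * ρ * H₁ * H₂`. Then `K * L` is a bit smaller than
`R * S`, and the arithmetic terms add up to about `3 / 20 * K * L`, which is beaten by the analytic
gain of about `K * L / 4`. -/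
theorem interpolationParameters_neg {d g p u v : ℝ} (hd₀ : 0 ≤ d) (hd : d ≤ g) (hg : 1 ≤ g)
    (hp : 1 ≤ p) (hu : u ≤ g) (hv : v ≤ 2 * g) :
    d * (u + 17600 * g ^ 4 * p * v + 70400 * g ^ 5 * p) + 2 * Real.log 2 +
      (35200 * g ^ 5 * p - (352000 * g ^ 6 * p - 17600 * g ^ 4 * p)) / 2 < 0 := by
  have h₄ : g ^ 4 * p ≤ g ^ 6 * p := by gcongr; norm_num
  have h₅ : g ^ 5 * p ≤ g ^ 6 * p := by gcongr; norm_num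
  have h₂ : g ^ 2 ≤ g ^ 6 * p := by
    simpa using mul_le_mul (pow_le_pow_right₀ hg (by norm_num : 2 ≤ 6)) hp zero_le_one
      (by positivity)
  have h₀ : 1 ≤ g ^ 6 * p := (one_le_pow₀ hg).trans h₂
  have hsum : d * (u + 17600 * g ^ 4 * p * v + 70400 * g ^ 5 * p) ≤
      g ^ 2 + 105600 * (g ^ 6 * p) := by
    calc d * (u + 17600 * g ^ 4 * p * v + 70400 * g ^ 5 * p)
        ≤ d * (g + 17600 * g ^ 4 * p * (2 * g) + 70400 * g ^ 5 * p) := by gcongr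
      _ ≤ g * (g + 17600 * g ^ 4 * p * (2 * g) + 70400 * g ^ 5 * p) := by gcongr
      _ = g ^ 2 + 105600 * (g ^ 6 * p) := by ring
  linarith [Real.log_two_lt_d9]

theorem interpolationParameters_card_lt {G H₁ H₂ : ℕ} (hG : 1 ≤ G) (hH₁ : 1 ≤ H₁) (hH₂ : 1 ≤ H₂) :
    17600 * G ^ 4 * H₁ * H₂ * (40 * G ^ 2) <
      (880 * G ^ 3 * H₂ - 40 * G ^ 2) * (880 * G ^ 3 * H₁) := by
  have hle : G ^ 2 ≤ G ^ 3 * H₂ :=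
    (Nat.pow_le_pow_right hG (by norm_num)).trans (Nat.le_mul_of_pos_right _ hH₂)
  have hsub : 840 * G ^ 3 * H₂ ≤ 880 * G ^ 3 * H₂ - 40 * G ^ 2 := by
    rw [mul_assoc, mul_assoc]
    omega
  calc 17600 * G ^ 4 * H₁ * H₂ * (40 * G ^ 2) = 704000 * (G ^ 6 * H₁ * H₂) := by ring
    _ < 739200 * (G ^ 6 * H₁ * H₂) := by gcongr; norm_num
    _ = 840 * G ^ 3 * H₂ * (880 * G ^ 3 * H₁) := by ring
    _ ≤ _ := by gcongr

theorem exists_two_mul_add_eq_mul {G K : ℕ} (hG : 1 ≤ G) (hK : 1 ≤ K) :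
    ∃ J, 2 ≤ J ∧ 2 * (K + J) = K * (40 * G ^ 2) := by
  obtain ⟨c, hc⟩ := Nat.exists_eq_add_of_le (show 1 ≤ 20 * G ^ 2 by nlinarith)
  refine ⟨K * c, by nlinarith, ?_⟩
  rw [show 40 * G ^ 2 = 2 * (1 + c) by omega]
  ring

theorem exp_neg_lt_of_exp_neg_lt_mul {B J Y b g x : ℝ} (hx : 0 ≤ x) (hb : b ≤ Real.exp g)
    (hB : J + Y + g ≤ B) (h : Real.exp (-J) < b * x * Real.exp Y) : Real.exp (-B) < x := by
  calc Real.exp (-B) ≤ Real.exp (-J - Y - g) := Real.exp_le_exp.2 (by linarith)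
    _ = Real.exp (-J) / (Real.exp g * Real.exp Y) := by
        rw [Real.exp_sub, Real.exp_sub, div_div, mul_comm (Real.exp Y)]
    _ < x := by
        rw [div_lt_iff₀ (by positivity), mul_left_comm, ← mul_assoc, mul_comm (Real.exp g) x]
        refine h.trans_le ?_
        rw [mul_comm x]
        gcongr

theorem exp_neg_lt_abs_of_hasHeightBound (σ₀ : F →ₐ[ℚ] ℂ) {G H₁ H₂ q : ℕ}
    (hG : Module.finrank ℚ F ≤ G) (hθ₁ : HasHeightBound θ₁ H₁) (hθ₂ : HasHeightBound θ₂ H₂)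
    {η Λ : ℝ} (h₁ : σ₀ θ₁ = (Real.exp η : ℂ)) (h₂ : σ₀ θ₂ = (Real.exp (Λ - q * η) : ℂ))
    (hη : η ≠ 0) (hH₁ : 1 ≤ H₁) (hH₂ : 1 ≤ H₂) (hR : 880 * G ^ 3 * H₂ ≤ q) (hqη : q * |η| ≤ H₂)
    (hq : q ≤ Real.exp G) (hP : 704000 * G ^ 6 * H₁ * H₂ ≤ Real.exp G) :
    Real.exp (-(400000 * G ^ 6 * H₁ * H₂)) < |Λ| := by
  have hG₁ : 1 ≤ G := Module.finrank_pos.trans_le hG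
  have hg : (1 : ℝ) ≤ G := by exact_mod_cast hG₁
  set p : ℝ := H₁ * H₂ with hpdef
  have hp : 1 ≤ p := one_le_mul_of_one_le_of_one_le (by exact_mod_cast hH₁) (by exact_mod_cast hH₂)
  have h₁₆ : G ≤ G ^ 6 * p :=
    (le_self_pow₀ hg (by norm_num)).trans (le_mul_of_one_le_right (by positivity) hp)
  have h₄₆ : G ^ 4 * p ≤ G ^ 6 * p := by gcongr; norm_num
  have h₅₆ : G ^ 5 * p ≤ G ^ 6 * p := by gcongr; norm_num
  have h₄₀ : 0 ≤ G ^ 4 * p := by positivity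
  obtain ⟨J, hJ₂, hKJ⟩ := exists_two_mul_add_eq_mul (K := 17600 * G ^ 4 * H₁ * H₂) hG₁
    (Nat.one_le_iff_ne_zero.2 (by positivity))
  have hJ : (J : ℝ) = 352000 * G ^ 6 * p - 17600 * G ^ 4 * p := by
    have : (2 * (17600 * G ^ 4 * H₁ * H₂ + J) : ℝ) =
      17600 * G ^ 4 * H₁ * H₂ * (40 * G ^ 2) := by exact_mod_cast hKJ
    rw [hpdef]
    linarith
  have hLS : (40 * G ^ 2 : ℕ) * (880 * G ^ 3 * H₁ : ℕ) ≤ Real.exp G := by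
    refine le_trans ?_ hP
    exact_mod_cast (show 40 * G ^ 2 * (880 * G ^ 3 * H₁) ≤ 704000 * G ^ 6 * H₁ * H₂ from
      calc 40 * G ^ 2 * (880 * G ^ 3 * H₁) = 35200 * G ^ 5 * H₁ * 1 := by ring
        _ ≤ 704000 * G ^ 6 * H₁ * H₂ := by gcongr <;> norm_num)
  have hS : (880 * G ^ 3 * H₁ : ℕ) ≤ Real.exp G :=
    (le_mul_of_one_le_left (Nat.cast_nonneg _) (by exact_mod_cast (by nlinarith))).trans hLS
  have hq₀ : 0 < q := lt_of_lt_of_le (by positivity) hR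
  have hparam := interpolationParameters_neg (Nat.cast_nonneg (Module.finrank ℚ F))
    (Nat.cast_le.2 hG) hg hp (u := Real.log ((17600 * G ^ 4 * H₁ * H₂ : ℕ) * (40 * G ^ 2 : ℕ)))
    (v := Real.log (q * (880 * G ^ 3 * H₁ : ℕ)))
    ((Real.log_le_iff_le_exp (by positivity)).2 (hP.trans_eq' (by push_cast; ring)))
    ((Real.log_le_iff_le_exp (by positivity)).2 (by rw [two_mul, Real.exp_add]; gcongr))
  refine exp_neg_lt_of_exp_neg_lt_mul (abs_nonneg Λ) hLS (by rw [hJ]; linarith)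
    (exp_neg_lt_of_hasHeightBound σ₀ hθ₁ hθ₂ h₁ h₂ hη hR
      (interpolationParameters_card_lt hG₁ hH₁ hH₂) hKJ hJ₂ (Y := 35200 * G ^ 5 * p) ?_ ?_ ?_)
  · calc (_ : ℝ) = (40 * G ^ 2 : ℕ) * (880 * G ^ 3 * H₁ : ℕ) * (q * |η|) := by ring
      _ ≤ (40 * G ^ 2 : ℕ) * (880 * G ^ 3 * H₁ : ℕ) * H₂ := by gcongr
      _ = 35200 * G ^ 5 * p := by rw [hpdef]; push_cast; ring
  · rw [hJ]
    linarith
  · rw [hJ]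
    convert hparam using 5 <;> push_cast <;> ring

end LinearFormInLogarithms

section SmallLinearForms

theorem exists_natCast_mul_sub_natCast_mul_le {x y : ℝ} (hx : 0 < x) (hy : 0 ≤ y) {X : ℕ}
    (hX : 0 < X) : ∃ u v : ℕ, 0 < v ∧ v ≤ X ∧ |u * x - v * y| ≤ x / (X + 1) := by
  obtain ⟨v, hv, hvX, h⟩ := Real.exists_nat_abs_mul_sub_round_le (y / x) hX
  lift round (v * (y / x)) to ℕ using
    (round_eq (v * (y / x)) ▸ Int.floor_nonneg.2 (by positivity)) with u
  refine ⟨u, v, hv, hvX, ?_⟩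
  have hscale : (u * x - v * y : ℝ) = -(x * (v * (y / x) - u)) := by field_simp; ring
  rw [hscale, abs_neg, abs_mul, abs_of_pos hx, div_eq_mul_one_div x]
  exact mul_le_mul_of_nonneg_left h hx.le

variable {F : Type*} [Field F]

theorem not_isIntegral_inv_natCast [CharZero F] {b : ℕ} (hb : 2 ≤ b) :
    ¬IsIntegral ℤ (b : F)⁻¹ := by
  intro h
  have hcast : (b : F)⁻¹ = algebraMap ℚ F (b : ℚ)⁻¹ := by simp
  rw [hcast, isIntegral_algebraMap_iff (algebraMap ℚ F).injective] at h
  obtain ⟨y, hy⟩ := IsIntegrallyClosed.isIntegral_iff.1 h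
  have hyb : (y : ℚ) * b = 1 := by
    rw [show (y : ℚ) = (b : ℚ)⁻¹ by simpa using hy, inv_mul_cancel₀ (by positivity)]
  have := Int.eq_one_or_neg_one_of_mul_eq_one' (show y * b = 1 by exact_mod_cast hyb)
  omega

theorem pow_ne_natCast_pow [CharZero F] {a : F} (ha : IsIntegral ℤ a⁻¹) {b : ℕ} (hb : 2 ≤ b)
    (u : ℕ) {v : ℕ} (hv : v ≠ 0) : a ^ u ≠ (b : F) ^ v := fun h =>
  not_isIntegral_inv_natCast (F := F) (hb.trans (Nat.le_self_pow hv b)) <| by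
    rw [Nat.cast_pow, ← h, ← inv_pow]
    exact ha.pow u

theorem natCast_mul_log_sub_ne_zero [CharZero F] {a : F} (ha : IsIntegral ℤ a⁻¹) {σ₀ : F →+* ℂ}
    {α : ℝ} (hσ₀ : σ₀ a = (α : ℂ)) (hα : 0 < α) {b : ℕ} (hb : 2 ≤ b) (u : ℕ) {v : ℕ} (hv : v ≠ 0) :
    u * Real.log α - v * Real.log b ≠ 0 := fun h => by
  rw [sub_eq_zero, ← Real.log_pow, ← Real.log_pow] at h
  have hpow : α ^ u = b ^ v :=
    Real.log_injOn_pos (Set.mem_Ioi.2 (by positivity)) (Set.mem_Ioi.2 (by positivity)) h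
  refine pow_ne_natCast_pow ha hb u hv (σ₀.injective ?_)
  rw [map_pow, map_pow, hσ₀, map_natCast]
  exact_mod_cast hpow

theorem hasHeightBound_mul_zpow_div_natCast_pow [CharZero F] {a γ : F} {A B : ℝ}
    (ha : HasHeightBound a A) (ha₀ : a ≠ 0) (hγ : HasHeightBound γ B) {b : ℕ} (hb : b ≠ 0)
    (s : ℤ) (t : ℕ) :
    HasHeightBound (γ * a ^ s / (b : F) ^ t) (B + s.natAbs * A + t * Real.log b) := by
  rw [div_eq_mul_inv]
  exact (hγ.mul (ha.zpow ha₀ s)).mul (((HasHeightBound.natCast b).pow t).inv (by positivity))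

theorem map_mul_zpow_div_natCast_pow_eq_exp (σ₀ : F →+* ℂ) {a γ : F} {α c : ℝ}
    (hσa : σ₀ a = (α : ℂ)) (hα : 0 < α) (hσγ : σ₀ γ = (c : ℂ)) (hc : 0 < c) {b : ℕ} (hb : b ≠ 0)
    (s : ℤ) (t : ℕ) : σ₀ (γ * a ^ s / (b : F) ^ t) =
      (Real.exp (Real.log c + s * Real.log α - t * Real.log b) : ℂ) := by
  rw [Real.exp_sub, Real.exp_add, ← Real.log_zpow, ← Real.log_pow,
    Real.exp_log hc, Real.exp_log (by positivity), Real.exp_log (by positivity), map_div₀, map_mul,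
    map_zpow₀, map_pow, map_natCast, hσa, hσγ]
  push_cast
  rfl

theorem natCast_mul_le_natCast_div_add_one {x : ℝ} {X : ℕ} (hx : x ≤ 1 / X) (q : ℕ) :
    q * x ≤ (q / X : ℕ) + 1 := by
  calc q * x ≤ q * (1 / X) := by gcongr
    _ = q / X := (div_eq_mul_one_div _ _).symm
    _ ≤ (q / X : ℕ) + 1 := by
      rw [← Nat.floor_div_eq_div (K := ℝ)]
      exact (Nat.lt_floor_add_one _).le

variable {G M N X v : ℕ}

theorem mul_le_div_of_mul_pow_le (hX : X = 10 ^ 9 * G ^ 6) (hG : 1 ≤ G) (hN : 11 * X ^ 3 ≤ N)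
    (hNM : N ≤ 4 * M) (hv : 0 < v) (hvX : v ≤ X) :
    880 * G ^ 3 * (2 * (M / v / X) + 11 * X) ≤ M / v := by
  set q := M / v
  have hX₀ : 0 < X := hv.trans_le hvX
  have hGX : 10 ^ 9 * G ^ 3 ≤ X :=
    hX ▸ Nat.mul_le_mul_left _ (Nat.pow_le_pow_right hG (by norm_num))
  have hM : M < X * (q + 1) :=
    (Nat.lt_mul_div_succ M hv).trans_le (Nat.mul_le_mul_right _ hvX)
  have hq : 11 * X ^ 2 < 4 * (q + 1) := Nat.lt_of_mul_lt_mul_left (a := X) (by nlinarith)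
  have hqX : X * (q / X) ≤ q := Nat.mul_div_le q X
  have hX₂ : 1 ≤ X ^ 2 := Nat.pow_pos hX₀
  refine Nat.le_of_mul_le_mul_left (c := 10 ^ 9) ?_ (by norm_num)
  calc 10 ^ 9 * (880 * G ^ 3 * (2 * (q / X) + 11 * X))
      = 880 * (10 ^ 9 * G ^ 3) * (2 * (q / X) + 11 * X) := by ring
    _ ≤ 880 * X * (2 * (q / X) + 11 * X) := by gcongr
    _ = 1760 * (X * (q / X)) + 9680 * X ^ 2 := by ring
    _ ≤ 10 ^ 9 * q := by omega

theorem mul_le_three_mul_of_mul_pow_le (hX : X = 10 ^ 9 * G ^ 6) (hN : 11 * X ^ 3 ≤ N)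
    (hMN : M ≤ N) (hvX : v ≤ X) :
    10 ^ 9 * G ^ 6 * v * (2 * (M / v / X) + 11 * X) ≤ 3 * N := by
  have hdiv : X * v * (M / v / X) ≤ M :=
    calc X * v * (M / v / X) = v * (X * (M / v / X)) := by ring
      _ ≤ v * (M / v) := by gcongr; exact Nat.mul_div_le _ _
      _ ≤ M := Nat.mul_div_le M v
  calc 10 ^ 9 * G ^ 6 * v * (2 * (M / v / X) + 11 * X)
      = 2 * (X * v * (M / v / X)) + 11 * (X * v * X) := by rw [← hX]; ring
    _ ≤ 2 * M + 11 * (X * X * X) := by gcongr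
    _ = 2 * M + 11 * X ^ 3 := by ring
    _ ≤ 3 * N := by omega

theorem natAbs_le_of_sub_eq_add_mul_sub {s : ℤ} {x Λ e y z : ℝ} (hx : 1 / 2 ≤ x)
    (h : Λ - e = z + s * x - y) (hy : 0 ≤ y) : (s.natAbs : ℝ) ≤ 2 * (|Λ| + |e| + y + |z|) := by
  have habs : |(s : ℝ)| * x = |Λ - e + y - z| := by
    have hmul : s * x = Λ - e + y - z := by rw [h]; ring
    rw [← hmul, abs_mul, abs_of_nonneg (by linarith : 0 ≤ x)]
  have htri : |Λ - e + y - z| ≤ |Λ| + |e| + y + |z| := by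
    have := abs_sub (Λ - e + y) z
    have := abs_add_le (Λ - e) y
    have := abs_sub Λ e
    rw [abs_of_nonneg hy] at *
    linarith
  rw [Nat.cast_natAbs, Int.cast_abs]
  nlinarith [abs_nonneg (s : ℝ)]

theorem log_ten_mul_le (j : ℕ) : j * Real.log 10 ≤ 2.31 * j := by
  rw [mul_comm]
  gcongr
  linarith [Real.log_ten_eq, Real.log_two_lt_d9, Real.log_five_lt_d9]

theorem hasHeightBound_pow_div_ten_pow [CharZero F] {a : F} (ha : HasHeightBound a 1)
    (ha₀ : a ≠ 0) {x : ℝ} (hx : 1 / 2 ≤ x) {u : ℕ} (hv : 0 < v)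
    (h : u * x - v * Real.log 10 ≤ 1) :
    HasHeightBound (((1 : ℕ) : F) * a ^ (u : ℤ) / ((10 : ℕ) : F) ^ v) (9 * v : ℕ) := by
  refine (hasHeightBound_mul_zpow_div_natCast_pow ha ha₀ (.natCast 1) (by norm_num) _ _).mono ?_
  have hv₁ : (1 : ℝ) ≤ v := by exact_mod_cast hv
  have hu : (u : ℝ) * (1 / 2) ≤ u * x := by gcongr
  have hlog := log_ten_mul_le v
  push_cast
  rw [Int.natAbs_natCast, Real.log_one]
  linarith

theorem hasHeightBound_mul_zpow_div_ten_pow [CharZero F] {a γ : F} {x z B Λ e : ℝ}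
    (ha : HasHeightBound a 1) (ha₀ : a ≠ 0) (hγ : HasHeightBound γ B) (hx : 1 / 2 ≤ x)
    (hz : |z| ≤ B) (hB : B ≤ X) (hX : 8 ≤ X) {s : ℤ} {t Q : ℕ} (ht : t ≤ X)
    (h : Λ - e = z + s * x - t * Real.log (10 : ℕ)) (hΛ : |Λ| ≤ 1) (he : |e| ≤ Q + 1) :
    HasHeightBound (γ * a ^ s / ((10 : ℕ) : F) ^ t) (2 * Q + 11 * X : ℕ) := by
  refine (hasHeightBound_mul_zpow_div_natCast_pow ha ha₀ hγ (by norm_num) _ _).mono ?_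
  have hs := natAbs_le_of_sub_eq_add_mul_sub hx h (by positivity)
  have ht' : (t : ℝ) ≤ X := by exact_mod_cast ht
  have hX' : (8 : ℝ) ≤ X := by exact_mod_cast hX
  have hlog := log_ten_mul_le t
  push_cast at hs ⊢
  linarith

variable [NumberField F] {a γ : F} {α c B : ℝ}

theorem exp_neg_lt_abs_of_abs_sub_le (σ₀ : F →ₐ[ℚ] ℂ) (hF : Module.finrank ℚ F ≤ G)
    (ha : HasHeightBound a 1) (ha₀ : a ≠ 0) (hγ : HasHeightBound γ B) (hσa : σ₀ a = (α : ℂ))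
    (hα₀ : 0 < α) (hα : 1 / 2 ≤ Real.log α) (hσγ : σ₀ γ = (c : ℂ)) (hc : 0 < c)
    (hcB : |Real.log c| ≤ B) (hX : X = 10 ^ 9 * G ^ 6) (hB : B ≤ X) (hN : 11 * X ^ 3 ≤ N)
    (hNG : N ≤ Real.exp G) (hMN : M ≤ N) (hNM : N ≤ 4 * M) {u : ℕ} (hv : 0 < v) (hvX : v ≤ X)
    (hη₀ : u * Real.log α - v * Real.log 10 ≠ 0)
    (hη : |u * Real.log α - v * Real.log 10| ≤ 1 / X) :
    Real.exp (-(N / 50)) < |N * Real.log α - M * Real.log 10 + Real.log c| := by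
  by_contra! hΛ
  have hG : 1 ≤ G := Module.finrank_pos.trans_le hF
  have hX₀ : 8 ≤ X := hX ▸ le_mul_of_le_of_one_le (by norm_num) (Nat.one_le_pow _ _ hG)
  set η := u * Real.log α - v * Real.log 10 with hηdef
  set Λ := N * Real.log α - M * Real.log 10 + Real.log c with hΛdef
  set q := M / v
  have hM : (M : ℝ) = v * q + (M % v : ℕ) := by exact_mod_cast (Nat.div_add_mod M v).symm
  have hqη : q * |η| ≤ (q / X : ℕ) + 1 := natCast_mul_le_natCast_div_add_one hη q
  have hη₁ : η ≤ 1 := (le_abs_self η).trans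
    (hη.trans (div_le_one_of_le₀ (by exact_mod_cast (by omega : 1 ≤ X)) (by positivity)))
  have hΛq : Λ - q * η =
      Real.log c + (N - q * u : ℤ) * Real.log α - (M % v : ℕ) * Real.log (10 : ℕ) := by
    rw [hΛdef, hηdef, hM]
    push_cast
    ring
  have hheight₁ := hasHeightBound_pow_div_ten_pow ha ha₀ hα hv hη₁
  have hheight₂ := hasHeightBound_mul_zpow_div_ten_pow ha ha₀ hγ hα hcB hB (by omega)
    ((Nat.mod_lt M hv).le.trans hvX) hΛq
    (hΛ.trans (Real.exp_le_one_iff.2 (neg_nonpos.2 (by positivity))))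
    (by rwa [abs_mul, Nat.abs_cast])
  have hcost : (10 ^ 9 * G ^ 6 * v * (2 * (q / X) + 11 * X : ℕ) : ℝ) ≤ 3 * N := by
    exact_mod_cast mul_le_three_mul_of_mul_pow_le hX hN hMN hvX
  refine (exp_neg_lt_abs_of_hasHeightBound σ₀ hF hheight₁ hheight₂ (η := η) (Λ := Λ) (q := q)
    ?_ ?_ hη₀ (by omega) (by omega) (mul_le_div_of_mul_pow_le hX hG hN hNM hv hvX) ?_ ?_
    ?_).not_ge (hΛ.trans (Real.exp_le_exp.2 ?_))
  · refine (map_mul_zpow_div_natCast_pow_eq_exp σ₀.toRingHom hσa hα₀ (c := 1) (by simp) one_pos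
      (by norm_num) _ _).trans ?_
    simp [η]
  · rw [hΛq]
    exact map_mul_zpow_div_natCast_pow_eq_exp σ₀.toRingHom hσa hα₀ hσγ hc (by norm_num) _ _
  · exact hqη.trans (by exact_mod_cast (by omega : q / X + 1 ≤ 2 * (q / X) + 11 * X))
  · exact le_trans (by exact_mod_cast (Nat.div_le_self M v).trans hMN) hNG
  all_goals
    push_cast at hcost ⊢
    linarith

/- If `Λ` were tiny, Dirichlet approximation of `log 10 / log α` would write it as `q * η` plus the
logarithm of a number of moderate height, where `η = u * log α - v * log 10` is itself small: this
is the degenerate situation in which two logarithms suffice. -/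
theorem exp_neg_lt_abs_natCast_mul_log_sub (σ₀ : F →ₐ[ℚ] ℂ) (hF : Module.finrank ℚ F ≤ G)
    (ha : HasHeightBound a 1) (ha' : IsIntegral ℤ a⁻¹) (hγ : HasHeightBound γ B)
    (hσa : σ₀ a = (α : ℂ)) (hα₀ : 0 < α) (hα : 1 / 2 ≤ Real.log α) (hα₁ : Real.log α ≤ 1)
    (hσγ : σ₀ γ = (c : ℂ)) (hc : 0 < c) (hcB : |Real.log c| ≤ B) (hX : X = 10 ^ 9 * G ^ 6)
    (hB : B ≤ X) (hN : 11 * X ^ 3 ≤ N) (hNG : N ≤ Real.exp G) (hMN : M ≤ N) (hNM : N ≤ 4 * M) :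
    Real.exp (-(N / 50)) < |N * Real.log α - M * Real.log 10 + Real.log c| := by
  have hG : 0 < G := Module.finrank_pos.trans_le hF
  have hX₀ : 0 < X := hX ▸ by positivity
  obtain ⟨u, v, hv, hvX, hη⟩ := exists_natCast_mul_sub_natCast_mul_le
    (by linarith : 0 < Real.log α) (by positivity : 0 ≤ Real.log 10) hX₀
  have ha₀ : a ≠ 0 := by
    rintro rfl
    rw [map_zero] at hσa
    exact hα₀.ne (by exact_mod_cast hσa)
  refine exp_neg_lt_abs_of_abs_sub_le σ₀ hF ha ha₀ hγ hσa hα₀ hα hσγ hc hcB hX hB hN hNG hMN hNM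
    hv hvX ?_ (hη.trans (by gcongr; linarith))
  simpa using natCast_mul_log_sub_ne_zero ha' (σ₀ := σ₀.toRingHom) hσa hα₀ (b := 10)
    (by norm_num) u hv.ne'

end SmallLinearForms

section DominantRoot

/-- The coefficient of `α ^ n` in the Binet formula for `F_{n+1}^(k)`, for each characteristic root
`α`; it is usually denoted `f_k(α)`. The field is arbitrary, so that it applies both to the real
dominant root and to an abstract generator of the field of that root. -/
def binetCoeff {K : Type*} [Field K] (k : ℕ) (α : K) : K := (α - 1) / (2 + (k + 1) * (α - 2))

theorem map_binetCoeff {K L : Type*} [Field K] [Field L] (σ : K →+* L) (k : ℕ) (a : K) :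
    σ (binetCoeff k a) = binetCoeff k (σ a) := by
  simp [binetCoeff, map_ofNat σ]

/-- `α` is the dominant characteristic root of the `k`-generalized Fibonacci recurrence: the
equation is the characteristic one multiplied by `α - 1`, and the lower bound singles out the root
close to `2` when `k` is large. -/
structure IsDominantRoot (k : ℕ) (α : ℝ) : Prop where
  pow_mul_two_sub : α ^ k * (2 - α) = 1
  lt : 1.9 < α

theorem hundred_mul_le_pow {k : ℕ} (hk : 900 ≤ k) : (100 * k : ℝ) ≤ 1.9 ^ k := by
  induction k, hk using Nat.le_induction with
  | base =>
    calc (100 * (900 : ℕ) : ℝ) ≤ 1.9 ^ 20 := by norm_num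
      _ ≤ 1.9 ^ 900 := pow_le_pow_right₀ (by norm_num) (by norm_num)
  | succ j hj ih =>
    have hj' : (900 : ℝ) ≤ j := by exact_mod_cast hj
    rw [pow_succ]
    push_cast
    linarith

theorem exists_isDominantRoot {k : ℕ} (hk : 900 ≤ k) : ∃ α : ℝ, IsDominantRoot k α := by
  have hcont : ContinuousOn (fun x : ℝ => x ^ k * (2 - x)) (Set.Icc 1.9 2) := by fun_prop
  have hlarge : (1 : ℝ) < 1.9 ^ k * (2 - 1.9) := by
    have := hundred_mul_le_pow hk
    have : (900 : ℝ) ≤ k := by exact_mod_cast hk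
    linarith
  obtain ⟨α, ⟨hα, -⟩, hroot⟩ := intermediate_value_Icc' (by norm_num) hcont
    (show (1 : ℝ) ∈ Set.Icc _ _ from ⟨by norm_num, hlarge.le⟩)
  refine ⟨α, hroot, hα.lt_of_ne ?_⟩
  rintro rfl
  exact hlarge.ne' hroot

namespace IsDominantRoot

variable {k : ℕ} {α : ℝ}

theorem pos (h : IsDominantRoot k α) : 0 < α := by linarith [h.lt]

theorem lt_two (h : IsDominantRoot k α) : α < 2 := by
  have := pos_of_mul_pos_right (h.pow_mul_two_sub ▸ one_pos) (pow_nonneg h.pos.le k)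
  linarith

theorem mul_two_sub_le (h : IsDominantRoot k α) (hk : 900 ≤ k) : k * (2 - α) ≤ 1 / 100 := by
  have hle : 100 * k * (2 - α) ≤ α ^ k * (2 - α) := by
    refine mul_le_mul_of_nonneg_right ((hundred_mul_le_pow hk).trans ?_) (by linarith [h.lt_two])
    gcongr
    exact h.lt.le
  linarith [h.pow_mul_two_sub]

theorem three_fifths_le_log (h : IsDominantRoot k α) : 3 / 5 ≤ Real.log α := by
  rw [Real.le_log_iff_exp_le h.pos]
  refine le_of_pow_le_pow_left₀ (n := 5) (by norm_num) h.pos.le ?_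
  calc Real.exp (3 / 5) ^ 5 = Real.exp 1 ^ 3 := by
        rw [← Real.exp_nat_mul, ← Real.exp_nat_mul]; norm_num
    _ ≤ 2.72 ^ 3 := by gcongr; linarith [Real.exp_one_lt_d9]
    _ ≤ 1.9 ^ 5 := by norm_num
    _ ≤ α ^ 5 := by gcongr; exact h.lt.le

theorem log_le_one (h : IsDominantRoot k α) : Real.log α ≤ 1 := by
  linarith [Real.log_le_sub_one_of_pos h.pos, h.lt_two]

theorem le_binetCoeff_denom (h : IsDominantRoot k α) (hk : 900 ≤ k) :
    1.8 ≤ 2 + (k + 1) * (α - 2) := by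
  linarith [h.mul_two_sub_le hk, h.lt]

theorem le_binetCoeff (h : IsDominantRoot k α) (hk : 900 ≤ k) : 0.45 ≤ binetCoeff k α := by
  have hden : (k + 1) * (α - 2) ≤ 0 :=
    mul_nonpos_of_nonneg_of_nonpos (by positivity) (by linarith [h.lt_two])
  rw [binetCoeff, le_div_iff₀ (by linarith [h.le_binetCoeff_denom hk])]
  linarith [h.lt]

theorem binetCoeff_le_one (h : IsDominantRoot k α) (hk : 900 ≤ k) : binetCoeff k α ≤ 1 := by
  rw [binetCoeff, div_le_one (by linarith [h.le_binetCoeff_denom hk])]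
  linarith [h.mul_two_sub_le hk]

end IsDominantRoot

theorem isIntegral_of_pow_mul_two_sub {R : Type*} [CommRing R] {k : ℕ} (hk : 0 < k) {a : R}
    (h : a ^ k * (2 - a) = 1) : IsIntegral ℤ a := by
  refine ⟨trinomial 0 k (k + 1) 1 (-2) 1, trinomial_monic hk k.lt_succ_self, ?_⟩
  simp only [algebraMap_int_eq, trinomial, eq_intCast, Int.cast_one, pow_zero, mul_one,
    Int.cast_neg, Int.cast_ofNat, neg_mul, one_mul, eval₂_add, eval₂_one, eval₂_neg,
    eval₂_mul, eval₂_ofNat, eval₂_X_pow]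
  linear_combination -h

variable {F : Type*} [Field F] {k : ℕ} {a : F}

theorem isIntegral_inv_of_pow_mul_two_sub (hk : 0 < k) (h : a ^ k * (2 - a) = 1) :
    IsIntegral ℤ a⁻¹ := by
  have ha := isIntegral_of_pow_mul_two_sub hk h
  obtain ⟨j, rfl⟩ := Nat.exists_eq_succ_of_ne_zero hk.ne'
  rw [inv_eq_of_mul_eq_one_right (b := a ^ j * (2 - a)) (by rw [← h, pow_succ]; ring)]
  exact (ha.pow j).mul ((isIntegral_natCast 2).sub ha)

theorem norm_le_of_pow_mul_two_sub {z : ℂ} (hk : 2 ≤ k) (h : z ^ k * (2 - z) = 1) :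
    ‖z‖ ≤ 5 / 2 := by
  by_contra! hz
  have hnorm : ‖z‖ ^ k * ‖2 - z‖ = 1 := by rw [← norm_pow, ← norm_mul, h, norm_one]
  have hsub : ‖z‖ - 2 ≤ ‖2 - z‖ := by
    simpa [norm_sub_rev] using norm_sub_norm_le z 2
  have hpow : ‖z‖ ^ 2 ≤ ‖z‖ ^ k := pow_le_pow_right₀ (by linarith) hk
  nlinarith

theorem hasHeightBound_of_pow_mul_two_sub [CharZero F] (hk : 2 ≤ k) (h : a ^ k * (2 - a) = 1) :
    HasHeightBound a 1 := by
  refine .of_isIntegral (isIntegral_of_pow_mul_two_sub (by omega) h) zero_le_one fun σ => ?_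
  have := norm_le_of_pow_mul_two_sub hk (z := σ a) (by simpa [map_ofNat σ] using congrArg σ h)
  linarith [Real.exp_one_gt_d9]

theorem hasHeightBound_binetCoeff [CharZero F] (hk : 2 ≤ k) (h : a ^ k * (2 - a) = 1)
    (hden : 2 + (k + 1) * (a - 2) ≠ 0) :
    HasHeightBound (binetCoeff k a) (Real.log (5 * k + 7)) := by
  have ha := isIntegral_of_pow_mul_two_sub (by omega) h
  have h₂ : IsIntegral ℤ (2 : F) := isIntegral_natCast 2
  have hk' : IsIntegral ℤ (k + 1 : F) := by exact_mod_cast isIntegral_natCast (k + 1)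
  refine ⟨_, _, ha.sub isIntegral_one, h₂.add (hk'.mul (ha.sub h₂)), hden, rfl, fun σ => ?_⟩
  have hσ := norm_le_of_pow_mul_two_sub hk (z := σ a) (by simpa [map_ofNat σ] using congrArg σ h)
  rw [Real.exp_log (by positivity)]
  constructor
  · rw [map_sub, map_one]
    linarith [norm_sub_le (σ a) 1, norm_one (α := ℂ), k.cast_nonneg (α := ℝ)]
  · have hfactor : ‖σ a - 2‖ ≤ 9 / 2 := by
      linarith [norm_sub_le (σ a) 2, Complex.norm_ofNat 2]
    calc ‖σ (2 + (k + 1) * (a - 2))‖ = ‖2 + ((k + 1 : ℕ) : ℂ) * (σ a - 2)‖ := by simp [map_ofNat σ]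
      _ ≤ 2 + (k + 1 : ℕ) * (9 / 2) := by
        refine (norm_add_le _ _).trans ?_
        rw [norm_mul, Complex.norm_natCast, Complex.norm_ofNat]
        gcongr
      _ ≤ 5 * k + 7 := by push_cast; linarith

theorem log_five_mul_add_seven_le : Real.log (5 * k + 7) ≤ k / 2 + 3 := by
  have h := Real.log_le_sub_one_of_pos (show (0 : ℝ) < (5 * k + 7) / 10 by positivity)
  rw [Real.log_div (by positivity) (by norm_num)] at h
  linarith [Real.log_ten_eq, Real.log_two_lt_d9, Real.log_five_lt_d9]

theorem hasHeightBound_mul_binetCoeff_div [CharZero F] (hk : 16 ≤ k) (h : a ^ k * (2 - a) = 1)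
    (hden : 2 + (k + 1) * (a - 2) ≠ 0) {A : ℕ} (hA : 0 < A) (hAk : Real.log A ≤ k) :
    HasHeightBound ((9 : ℕ) * binetCoeff k a * (A : F)⁻¹) (2 * k) := by
  refine (((HasHeightBound.natCast 9).mul (hasHeightBound_binetCoeff (by omega) h hden)).mul
    ((HasHeightBound.natCast A).inv (Nat.cast_ne_zero.2 hA.ne'))).mono ?_
  have hk' : (16 : ℝ) ≤ k := by exact_mod_cast hk
  have hlog : Real.log (9 : ℕ) ≤ Real.log 10 := Real.log_le_log (by norm_num) (by norm_num)
  linarith [log_five_mul_add_seven_le (k := k), Real.log_ten_eq, Real.log_two_lt_d9,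
    Real.log_five_lt_d9]

open IntermediateField in
theorem finrank_adjoin_le_of_pow_mul_two_sub {K : Type*} [Field K] [CharZero K] {α : K}
    (hk : 0 < k) (h : α ^ k * (2 - α) = 1) : Module.finrank ℚ ℚ⟮α⟯ ≤ k + 1 := by
  have hmonic : (trinomial 0 k (k + 1) 1 (-2) 1 : ℚ[X]).Monic :=
    trinomial_monic hk k.lt_succ_self
  have hroot : aeval α (trinomial 0 k (k + 1) 1 (-2) 1 : ℚ[X]) = 0 := by
    simp only [trinomial, map_one, pow_zero, mul_one, map_neg, neg_mul, one_mul, map_add,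
      map_mul, aeval_C, eq_ratCast, Rat.cast_ofNat, map_pow, aeval_X]
    linear_combination -h
  rw [adjoin.finrank ⟨_, hmonic, hroot⟩]
  exact (natDegree_le_natDegree (minpoly.min ℚ α hmonic hroot)).trans_eq
    (trinomial_natDegree hk k.lt_succ_self one_ne_zero)

end DominantRoot

section DominantRootApproximation

theorem mul_pow_le_two_pow {g : ℕ} (hg : 450 ≤ g) : 11 * (10 ^ 9 * (2 * g) ^ 6) ^ 3 ≤ 2 ^ g := by
  induction g, hg using Nat.le_induction with
  | base =>
    rw [show 450 = 225 * 2 by norm_num, pow_mul]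
    norm_num
  | succ g hg ih =>
    have hstep : (450 * (g + 1)) ^ 18 ≤ (451 * g) ^ 18 := Nat.pow_le_pow_left (by omega) _
    have hdouble : (g + 1) ^ 18 ≤ 2 * g ^ 18 := by
      refine Nat.le_of_mul_le_mul_left (c := 450 ^ 18) ?_ (by norm_num)
      calc 450 ^ 18 * (g + 1) ^ 18 ≤ 451 ^ 18 * g ^ 18 := by rwa [← mul_pow, ← mul_pow]
        _ ≤ (450 ^ 18 * 2) * g ^ 18 := Nat.mul_le_mul_right _ (by norm_num)
        _ = 450 ^ 18 * (2 * g ^ 18) := mul_assoc ..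
    calc 11 * (10 ^ 9 * (2 * (g + 1)) ^ 6) ^ 3
        = 11 * (10 ^ 9 * 2 ^ 6) ^ 3 * (g + 1) ^ 18 := by ring
      _ ≤ 11 * (10 ^ 9 * 2 ^ 6) ^ 3 * (2 * g ^ 18) := Nat.mul_le_mul_left _ hdouble
      _ = 11 * (10 ^ 9 * (2 * g) ^ 6) ^ 3 * 2 := by ring
      _ ≤ 2 ^ (g + 1) := Nat.mul_le_mul_right 2 ih

theorem natCast_le_exp_div_hundred {N : ℕ} (hN : 20000 ≤ N) : (N : ℝ) ≤ Real.exp (N / 100) := by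
  have hN' : (20000 : ℝ) ≤ N := by exact_mod_cast hN
  have := Real.quadratic_le_exp_of_nonneg (show (0 : ℝ) ≤ N / 100 by positivity)
  nlinarith

theorem abs_log_le_two_mul_abs_sub_one {y : ℝ} (hy : |y - 1| ≤ 1 / 2) :
    |Real.log y| ≤ 2 * |y - 1| := by
  obtain ⟨hlow, -⟩ := abs_le.1 hy
  have hy₀ : 0 < y := by linarith
  have hinv : -(2 * |y - 1|) ≤ 1 - y⁻¹ := by
    have hmul : 1 - y⁻¹ = (y - 1) * y⁻¹ := by field_simp
    have hle : y⁻¹ ≤ 2 := by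
      rw [inv_le_comm₀ hy₀ two_pos]
      linarith
    have := mul_le_mul_of_nonneg_left hle (abs_nonneg (y - 1))
    have := mul_le_mul_of_nonneg_right (neg_abs_le (y - 1)) (inv_pos.2 hy₀).le
    linarith
  exact abs_le.2 ⟨hinv.trans (Real.one_sub_inv_le_log_of_pos hy₀),
    (Real.log_le_sub_one_of_pos hy₀).trans (by linarith [le_abs_self (y - 1), abs_nonneg (y - 1)])⟩

variable {k : ℕ}

theorem two_pow_le_two_rpow_half {j : ℕ} (hj : 2 * j ≤ k) : (2 : ℝ) ^ j ≤ 2 ^ ((k : ℝ) / 2) := by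
  rw [← Real.rpow_natCast]
  have : (2 * j : ℝ) ≤ k := by exact_mod_cast hj
  exact Real.rpow_le_rpow_of_exponent_le one_le_two (by linarith)

theorem lt_two_mul_log_of_two_rpow_half_le {N : ℕ} (hN : 4 * (2 : ℝ) ^ ((k : ℝ) / 2) ≤ N) :
    k + 2 < 2 * Nat.log 2 N := by
  have hlt : (2 : ℝ) ^ ((2 : ℝ) + k / 2) < 2 ^ ((Nat.log 2 N + 1 : ℕ) : ℝ) := by
    rw [Real.rpow_add two_pos, Real.rpow_natCast]
    calc (2 : ℝ) ^ (2 : ℝ) * 2 ^ ((k : ℝ) / 2) = 4 * 2 ^ ((k : ℝ) / 2) := by norm_num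
      _ ≤ N := hN
      _ < 2 ^ (Nat.log 2 N + 1) := by exact_mod_cast Nat.lt_pow_succ_log_self one_lt_two N
  have hexp := (Real.rpow_lt_rpow_left_iff one_lt_two).1 hlt
  push_cast at hexp
  exact_mod_cast (by linarith : (k + 2 : ℝ) < 2 * Nat.log 2 N)

theorem natCast_le_exp_two_mul_log {N : ℕ} (hN : 2 ≤ N) :
    (N : ℝ) ≤ Real.exp (2 * Nat.log 2 N : ℕ) := by
  have hlog : 1 ≤ Nat.log 2 N := Nat.log_pos one_lt_two hN
  calc (N : ℝ) ≤ 2 ^ (Nat.log 2 N + 1) := by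
        exact_mod_cast (Nat.lt_pow_succ_log_self one_lt_two N).le
    _ ≤ 2 ^ (2 * Nat.log 2 N) := pow_le_pow_right₀ one_le_two (by omega)
    _ ≤ Real.exp 1 ^ (2 * Nat.log 2 N) := by gcongr; linarith [Real.exp_one_gt_d9]
    _ = Real.exp (2 * Nat.log 2 N : ℕ) := by rw [← Real.exp_nat_mul, mul_one]

theorem log_le_of_le_nine_mul_two_rpow_half (hk : 4 ≤ k) {x : ℝ} (hx : 0 < x)
    (hxk : x ≤ 9 * 2 ^ ((k : ℝ) / 2)) : Real.log x ≤ k := by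
  have hk' : (4 : ℝ) ≤ k := by exact_mod_cast hk
  have h := Real.log_le_log hx hxk
  rw [Real.log_mul (by norm_num) (by positivity), Real.log_rpow two_pos] at h
  have hnine : Real.log 9 ≤ Real.log 10 := Real.log_le_log (by norm_num) (by norm_num)
  nlinarith [Real.log_ten_eq, Real.log_two_lt_d9, Real.log_five_lt_d9]

namespace IsDominantRoot

variable {α : ℝ} {A G M N : ℕ}

theorem abs_log_nine_mul_binetCoeff_div_le (h : IsDominantRoot k α) (hk : 900 ≤ k) (hA : 0 < A)
    (hAk : Real.log A ≤ k) : |Real.log (9 * binetCoeff k α / A)| ≤ 2 * k := by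
  have hk' : (900 : ℝ) ≤ k := by exact_mod_cast hk
  have hlow := h.le_binetCoeff hk
  have hhigh := h.binetCoeff_le_one hk
  rw [Real.log_div (by positivity) (by positivity), abs_le]
  have := Real.log_natCast_nonneg A
  have := Real.log_nonneg (show 1 ≤ 9 * binetCoeff k α by linarith)
  have := Real.log_le_sub_one_of_pos (show 0 < 9 * binetCoeff k α by linarith)
  constructor <;> linarith

open IntermediateField in
theorem exp_neg_lt_abs_natCast_mul_log_sub (h : IsDominantRoot k α) (hk : 900 ≤ k)
    (hkG : k + 1 ≤ G) (hN : 11 * (10 ^ 9 * G ^ 6) ^ 3 ≤ N) (hNG : N ≤ Real.exp G) (hA : 0 < A)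
    (hAk : Real.log A ≤ k) (hMN : M ≤ N) (hNM : N ≤ 4 * M) :
    Real.exp (-(N / 50)) <
      |N * Real.log α - M * Real.log 10 + Real.log (9 * binetCoeff k α / A)| := by
  have hint : IsIntegral ℚ α :=
    (isIntegral_of_pow_mul_two_sub (by omega) h.pow_mul_two_sub).tower_top
  have : FiniteDimensional ℚ ℚ⟮α⟯ := adjoin.finiteDimensional hint
  have : NumberField ℚ⟮α⟯ := { }
  set a := AdjoinSimple.gen ℚ α
  let σ₀ : ℚ⟮α⟯ →ₐ[ℚ] ℂ := (Complex.ofRealAm.restrictScalars ℚ).comp (IntermediateField.val ℚ⟮α⟯)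
  have hσa : σ₀ a = (α : ℂ) := congrArg Complex.ofReal (AdjoinSimple.coe_gen ℚ α)
  have ha : a ^ k * (2 - a) = 1 := Subtype.ext h.pow_mul_two_sub
  have hden₀ := h.le_binetCoeff_denom hk
  have hden : 2 + (k + 1) * (a - 2) ≠ 0 := fun h₀ => by
    have : 2 + (k + 1) * (α - 2) = 0 := congrArg Subtype.val h₀
    linarith
  have hσcoeff : σ₀ (binetCoeff k a) = ((binetCoeff k α : ℝ) : ℂ) := by
    rw [show σ₀ (binetCoeff k a) = binetCoeff k (σ₀ a) from map_binetCoeff σ₀.toRingHom k a, hσa]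
    exact (map_binetCoeff Complex.ofRealHom k α).symm
  have hσγ : σ₀ ((9 : ℕ) * binetCoeff k a * (A : ℚ⟮α⟯)⁻¹) =
      ((9 * binetCoeff k α / A : ℝ) : ℂ) := by
    rw [map_mul, map_mul, map_inv₀, map_natCast, map_natCast, hσcoeff]
    push_cast
    rw [div_eq_mul_inv]
  refine _root_.exp_neg_lt_abs_natCast_mul_log_sub σ₀
    ((finrank_adjoin_le_of_pow_mul_two_sub (by omega) h.pow_mul_two_sub).trans hkG)
    (hasHeightBound_of_pow_mul_two_sub (by omega) ha)
    (isIntegral_inv_of_pow_mul_two_sub (by omega) ha)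
    (hasHeightBound_mul_binetCoeff_div (by omega) ha hden hA hAk) hσa h.pos
    (by linarith [h.three_fifths_le_log]) h.log_le_one hσγ ?_
    (h.abs_log_nine_mul_binetCoeff_div_le hk hA hAk) rfl ?_ hN hNG hMN hNM
  · have := h.le_binetCoeff hk
    positivity
  · exact_mod_cast (by nlinarith [Nat.le_self_pow (show 6 ≠ 0 by norm_num) G] :
      2 * k ≤ 10 ^ 9 * G ^ 6)

theorem exp_neg_lt_abs_log (h : IsDominantRoot k α) (hk : 900 ≤ k)
    (hN : 4 * (2 : ℝ) ^ ((k : ℝ) / 2) ≤ N) (hA : 0 < A) (hAk : Real.log A ≤ k) (hMN : M ≤ N)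
    (hNM : N ≤ 4 * M) :
    Real.exp (-(N / 50)) < |Real.log (9 * binetCoeff k α * α ^ N / (A * 10 ^ M))| := by
  have hg := lt_two_mul_log_of_two_rpow_half_le hN
  have hN₀ : N ≠ 0 := by
    rintro rfl
    simp at hg
  have hN₂ : 2 ≤ N := by
    by_contra! hlt
    rw [Nat.log_of_lt hlt] at hg
    omega
  have hcoeff : 0 < binetCoeff k α := by linarith [h.le_binetCoeff hk]
  have hα := h.pos
  convert h.exp_neg_lt_abs_natCast_mul_log_sub hk (by omega)
    ((mul_pow_le_two_pow (by omega)).trans (Nat.pow_log_le_self 2 hN₀))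
    (natCast_le_exp_two_mul_log hN₂) hA hAk hMN hNM using 2
  rw [show 9 * binetCoeff k α * α ^ N / (A * 10 ^ M) =
      α ^ N / 10 ^ M * (9 * binetCoeff k α / A) by field_simp,
    Real.log_mul (by positivity) (by positivity), Real.log_div (by positivity) (by positivity),
    Real.log_pow, Real.log_pow]

theorem le_pow (h : IsDominantRoot k α) (N : ℕ) : Real.exp (N / 100) ^ 60 ≤ α ^ N := by
  rw [← Real.exp_nat_mul, ← Real.exp_log (pow_pos h.pos N), Real.log_pow]
  refine Real.exp_le_exp.2 ?_
  push_cast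
  nlinarith [h.three_fifths_le_log, N.cast_nonneg (α := ℝ)]

theorem forty_mul_exp_le_pow (h : IsDominantRoot k α) (hN : 20000 ≤ N) :
    40 * Real.exp (N / 100) ≤ α ^ N := by
  have hN' : (20000 : ℝ) ≤ N := by exact_mod_cast hN
  have hS := natCast_le_exp_div_hundred hN
  calc 40 * Real.exp (N / 100) ≤ Real.exp (N / 100) * Real.exp (N / 100) := by gcongr; linarith
    _ = Real.exp (N / 100) ^ 2 := (sq _).symm
    _ ≤ Real.exp (N / 100) ^ 60 := pow_le_pow_right₀ (by linarith) (by norm_num)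
    _ ≤ α ^ N := h.le_pow N

theorem le_of_mul_ten_pow_le (h : IsDominantRoot k α) (hA : 0 < A)
    (hle : A * 10 ^ M ≤ 10 * α ^ N) (hN : N ≠ 0) : M ≤ N := by
  by_contra! hlt
  have hA' : (1 : ℝ) ≤ A := by exact_mod_cast hA
  have hpow : (10 : ℝ) * 10 ^ N ≤ 10 * 2 ^ N :=
    calc (10 : ℝ) * 10 ^ N = 10 ^ (N + 1) := (pow_succ' _ _).symm
      _ ≤ 10 ^ M := pow_le_pow_right₀ (by norm_num) hlt
      _ ≤ A * 10 ^ M := le_mul_of_one_le_left (by positivity) hA'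
      _ ≤ 10 * α ^ N := hle
      _ ≤ 10 * 2 ^ N := by
        have := pow_le_pow_left₀ h.pos.le h.lt_two.le N
        linarith
  have : (2 : ℝ) ^ N < 10 ^ N := pow_lt_pow_left₀ (by norm_num) (by norm_num) hN
  linarith

theorem le_four_mul_of_pow_le (h : IsDominantRoot k α) (hN : 20000 ≤ N) (hA : (A : ℝ) ≤ 2 * N)
    (hle : 4 * α ^ N ≤ A * 10 ^ M) : N ≤ 4 * M := by
  have hN' : (20000 : ℝ) ≤ N := by exact_mod_cast hN
  have hpow : α ^ N ≤ Real.exp (N / 100) * 10 ^ M := by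
    have : (A : ℝ) * 10 ^ M ≤ 2 * Real.exp (N / 100) * 10 ^ M := by
      gcongr
      linarith [natCast_le_exp_div_hundred hN]
    have : 0 < Real.exp (N / 100) * 10 ^ M := by positivity
    linarith
  have hlog := Real.log_le_log (pow_pos h.pos N) hpow
  rw [Real.log_mul (Real.exp_ne_zero _) (by positivity), Real.log_exp, Real.log_pow,
    Real.log_pow] at hlog
  have hten := log_ten_mul_le M
  have hα := mul_le_mul_of_nonneg_left h.three_fifths_le_log N.cast_nonneg
  exact_mod_cast (by linarith : (N : ℝ) ≤ 4 * M)

theorem two_mul_abs_div_sub_one_le (h : IsDominantRoot k α) {x w : ℝ}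
    (hx : |x - w| ≤ 2 * Real.exp (N / 100)) (hw : 4 * α ^ N ≤ w) :
    2 * |x / w - 1| ≤ Real.exp (-(N / 50)) := by
  have hαN : 0 < α ^ N := pow_pos h.pos N
  have hw₀ : 0 < w := by linarith
  have hpow : Real.exp (N / 100) ^ 3 ≤ α ^ N :=
    (pow_le_pow_right₀ (Real.one_le_exp (by positivity)) (by norm_num)).trans (h.le_pow N)
  calc 2 * |x / w - 1| = 2 * (|x - w| / w) := by
        rw [← abs_of_pos hw₀, ← abs_div, abs_of_pos hw₀, sub_div, div_self hw₀.ne']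
    _ ≤ 2 * (2 * Real.exp (N / 100) / (4 * α ^ N)) := by gcongr
    _ = Real.exp (N / 100) / α ^ N := by field_simp; norm_num
    _ ≤ Real.exp (N / 100) / Real.exp (N / 100) ^ 3 := by gcongr
    _ = Real.exp (-(N / 50)) := by
      rw [← Real.exp_nat_mul, ← Real.exp_sub]
      push_cast
      ring_nf

theorem two_mul_exp_lt_abs_sub (h : IsDominantRoot k α) (hk : 900 ≤ k)
    (hN : 5 * (2 : ℝ) ^ ((k : ℝ) / 2) ≤ N) {A : ℤ} (hA : A ≤ 9 * (2 : ℝ) ^ ((k : ℝ) / 2)) (M : ℕ) :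
    2 * Real.exp (N / 100) < |9 * binetCoeff k α * α ^ N - A * 10 ^ M| := by
  by_contra! hclose
  have hT : 2 ^ 20 ≤ (2 : ℝ) ^ ((k : ℝ) / 2) := two_pow_le_two_rpow_half (by omega)
  have hN₀ : 20000 ≤ N := by exact_mod_cast (by linarith : (20000 : ℝ) ≤ N)
  have hbig := h.forty_mul_exp_le_pow hN₀
  have hαN : 0 < α ^ N := pow_pos h.pos N
  have hlow := mul_le_mul_of_nonneg_right (h.le_binetCoeff hk) hαN.le
  have hhigh := mul_le_mul_of_nonneg_right (h.binetCoeff_le_one hk) hαN.le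
  have hle : 4 * α ^ N ≤ A * 10 ^ M := by linarith [(abs_le.1 hclose).2]
  have hge : A * 10 ^ M ≤ 10 * α ^ N := by linarith [(abs_le.1 hclose).1]
  have hA₀ : 0 < A := by
    exact_mod_cast pos_of_mul_pos_left (show 0 < (A : ℝ) * 10 ^ M by linarith) (by positivity)
  lift A to ℕ using hA₀.le
  rw [Int.cast_natCast] at *
  have hA₁ : 0 < A := by exact_mod_cast hA₀
  set y := 9 * binetCoeff k α * α ^ N / (A * 10 ^ M)
  have hexp : 2 * |y - 1| ≤ Real.exp (-(N / 50)) := h.two_mul_abs_div_sub_one_le hclose hle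
  have hlog := h.exp_neg_lt_abs_log hk (by linarith) hA₁
    (log_le_of_le_nine_mul_two_rpow_half (by omega) (by positivity) hA)
    (h.le_of_mul_ten_pow_le hA₁ hge (by omega)) (h.le_four_mul_of_pow_le hN₀ (by linarith) hle)
  refine hlog.not_ge ((abs_log_le_two_mul_abs_sub_one ?_).trans hexp)
  have : Real.exp (-(N / 50)) ≤ 1 := Real.exp_le_one_iff.2 (neg_nonpos.2 (by positivity))
  linarith

end IsDominantRoot

end DominantRootApproximation

section GeneralizedFibonacci

/-- `F` is the `k`-generalized Fibonacci sequence, on the indices `n ≥ 2 - k`; nothing is said about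
smaller indices. -/
structure IsKBonacci (k : ℕ) (F : ℤ → ℤ) : Prop where
  eq_zero : ∀ n : ℤ, 2 - (k : ℤ) ≤ n → n ≤ 0 → F n = 0
  one : F 1 = 1
  eq_sum : ∀ n : ℤ, 2 ≤ n → F n = ∑ i ∈ range k, F (n - 1 - (i : ℤ))

theorem int_induction_of_window {k : ℕ} {P : ℤ → Prop}
    (base : ∀ n : ℤ, 2 - (k : ℤ) ≤ n → n ≤ 1 → P n)
    (step : ∀ m : ℕ, (∀ i < k, P (m + 1 - i)) → P (m + 2)) {n : ℤ} (hn : 2 - (k : ℤ) ≤ n) :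
    P n := by
  obtain ⟨t, rfl⟩ := Int.le.dest hn
  induction t using Nat.strong_induction_on with
  | _ t ih =>
    rcases le_or_gt (2 - (k : ℤ) + t) 1 with hle | hgt
    · exact base _ hn hle
    · obtain ⟨m, hm⟩ := Int.le.dest (show (2 : ℤ) ≤ 2 - k + t by omega)
      rw [← hm, add_comm (2 : ℤ)]
      refine step m fun i hi => ?_
      convert ih (t - 1 - i) (by omega) (by omega) using 1
      omega

theorem sum_range_pow_mul_two_sub {K : Type*} [Field K] {k : ℕ} {α : K} (hα : α ≠ 1)
    (h : α ^ k * (2 - α) = 1) : ∑ i ∈ range k, α ^ i * (2 - α) = 1 := by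
  refine mul_right_cancel₀ (sub_ne_zero.2 hα) ?_
  rw [← sum_mul, mul_right_comm, geom_sum_mul]
  linear_combination h

namespace IsKBonacci

variable {k : ℕ} {F : ℤ → ℤ}

theorem two (hF : IsKBonacci k F) (hk : 0 < k) : F 2 = 1 := by
  rw [hF.eq_sum 2 le_rfl, sum_eq_single_of_mem 0 (mem_range.2 hk)]
  · simpa using hF.one
  · intro i hi hi₀
    have := mem_range.1 hi
    exact hF.eq_zero _ (by omega) (by omega)

theorem add_one (hF : IsKBonacci k F) {n : ℤ} (hn : 2 ≤ n) : F (n + 1) = 2 * F n - F (n - k) := by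
  have hsucc : F (n + 1) = ∑ i ∈ range k, F (n - i) := by
    simpa using hF.eq_sum (n + 1) (by omega)
  have hself : F n = ∑ i ∈ range k, F (n - (i + 1 : ℕ)) := by
    rw [hF.eq_sum n hn]
    exact sum_congr rfl fun i _ => by congr 1; push_cast; ring
  have htele := sum_range_succ (fun i : ℕ => F (n - i)) k
  rw [sum_range_succ', ← hsucc, ← hself, Nat.cast_zero, sub_zero] at htele
  linarith

theorem nonneg (hF : IsKBonacci k F) {n : ℤ} (hn : 2 - (k : ℤ) ≤ n) : 0 ≤ F n := by
  refine int_induction_of_window (P := fun n => 0 ≤ F n) (fun n hn hn₁ => ?_) (fun m ih => ?_) hn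
  · rcases hn₁.lt_or_eq with hlt | rfl
    · exact (hF.eq_zero n hn (by omega)).ge
    · simp [hF.one]
  · rw [hF.eq_sum _ (by omega)]
    refine sum_nonneg fun i hi => ?_
    rw [show (m + 2 - 1 - i : ℤ) = m + 1 - i by ring]
    exact ih i (mem_range.1 hi)

theorem le_two_pow (hF : IsKBonacci k F) (hk : 0 < k) (m : ℕ) : F (m + 2) ≤ 2 ^ m := by
  induction m with
  | zero => simp [hF.two hk]
  | succ m ih =>
    have hrec := hF.add_one (n := m + 2) (by omega)
    have := hF.nonneg (n := m + 2 - k) (by omega)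
    rw [show ((m + 1 : ℕ) : ℤ) + 2 = m + 2 + 1 by push_cast; ring, hrec, pow_succ]
    linarith

theorem two_pow_mul_le (hF : IsKBonacci k F) (hk : 0 < k) (m : ℕ) :
    2 ^ k * F (m + 2 - k) ≤ 2 ^ (m + 1) := by
  rcases lt_trichotomy (m + 1) k with hlt | rfl | hgt
  · rw [hF.eq_zero _ (by omega) (by omega), mul_zero]
    positivity
  · rw [show (m + 2 - (m + 1 : ℕ) : ℤ) = 1 by push_cast; ring, hF.one, mul_one]
  · obtain ⟨j, rfl⟩ := Nat.exists_eq_add_of_le (Nat.le_of_lt_succ hgt)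
    calc (2 : ℤ) ^ k * F ((k + j : ℕ) + 2 - k) = 2 ^ k * F (j + 2) := by
          congr 2
          push_cast
          ring
      _ ≤ 2 ^ k * 2 ^ j := by gcongr; exact hF.le_two_pow hk j
      _ = 2 ^ (k + j) := (pow_add 2 k j).symm
      _ ≤ 2 ^ (k + j + 1) := pow_le_pow_right₀ one_le_two (Nat.le_succ _)

theorem two_pow_mul_two_pow_sub_le (hF : IsKBonacci k F) (hk : 0 < k) (m : ℕ) :
    2 ^ k * (2 ^ m - F (m + 2)) ≤ m * 2 ^ m := by
  induction m with
  | zero => simp [hF.two hk]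
  | succ m ih =>
    have hrec := hF.add_one (n := m + 2) (by omega)
    have := hF.two_pow_mul_le hk m
    rw [show ((m + 1 : ℕ) : ℤ) + 2 = m + 2 + 1 by push_cast; ring, hrec]
    push_cast [pow_succ] at *
    linarith

theorem sub_sum_eq (hF : IsKBonacci k F) (hk : 0 < k) {R : Type*} [CommRing R] {α : R}
    (h : α ^ k * (2 - α) = 1) (m : ℕ) :
    (F (m + 2) : R) - ∑ i ∈ range k, α ^ i * (2 - α) * F (m + 1 - i) = (α - 1) * α ^ m := by
  induction m with
  | zero =>
    rw [sum_eq_single_of_mem 0 (mem_range.2 hk)]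
    · simp [hF.two hk, hF.one]
      ring
    · intro i hi hi₀
      have := mem_range.1 hi
      rw [hF.eq_zero _ (by omega) (by omega), Int.cast_zero, mul_zero]
  | succ m ih =>
    have hrec := hF.add_one (n := m + 2) (by omega)
    have htele := sum_range_succ (fun i : ℕ => α ^ i * (2 - α) * (F (m + 2 - i) : R)) k
    have hshift : ∑ i ∈ range k, α ^ (i + 1) * (2 - α) * (F (m + 2 - (i + 1 : ℕ)) : R) =
        α * ∑ i ∈ range k, α ^ i * (2 - α) * F (m + 1 - i) := by
      rw [mul_sum]
      refine sum_congr rfl fun i _ => ?_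
      rw [show (m + 2 - (i + 1 : ℕ) : ℤ) = m + 1 - i by push_cast; ring]
      ring
    rw [sum_range_succ', hshift, h] at htele
    rw [show ((m + 1 : ℕ) : ℤ) + 2 = m + 2 + 1 by push_cast; ring,
      show ((m + 1 : ℕ) : ℤ) + 1 = m + 2 by push_cast; ring, hrec]
    push_cast
    simp only [pow_zero, Nat.cast_zero, sub_zero, one_mul] at htele
    linear_combination α * ih + htele

theorem sub_binetCoeff_mul_zpow_eq_sum (hF : IsKBonacci k F) (hk : 0 < k) {K : Type*} [Field K]
    {α : K} (h : α ^ k * (2 - α) = 1) (hden : 2 + (k + 1) * (α - 2) ≠ 0) (m : ℕ) :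
    F (m + 2) - binetCoeff k α * α ^ ((m + 2 : ℤ) - 1) = ∑ i ∈ range k, α ^ i * (2 - α) *
      (F (m + 1 - i) - binetCoeff k α * α ^ ((m + 1 - i : ℤ) - 1)) := by
  have hα₀ : α ≠ 0 := by
    rintro rfl
    simp [hk.ne'] at h
  have hterm (i : ℕ) :
      α ^ i * (2 - α) * (F (m + 1 - i) - binetCoeff k α * α ^ ((m + 1 - i : ℤ) - 1)) =
        α ^ i * (2 - α) * F (m + 1 - i) - binetCoeff k α * (2 - α) * α ^ m := by
    have hpow : α ^ i * α ^ ((m + 1 - i : ℤ) - 1) = α ^ m := by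
      rw [← zpow_natCast, ← zpow_add₀ hα₀, ← zpow_natCast]
      congr 1
      ring
    rw [← hpow]
    ring
  have hcoeff : binetCoeff k α * (2 + (k + 1) * (α - 2)) = α - 1 := div_mul_cancel₀ _ hden
  have hsucc : α ^ ((m + 2 : ℤ) - 1) = α ^ m * α := by
    rw [← pow_succ, ← zpow_natCast]
    congr 1
    push_cast
    ring
  simp only [hterm]
  rw [sum_sub_distrib, sum_const, card_range, nsmul_eq_mul, hsucc]
  linear_combination hF.sub_sum_eq hk h m - α ^ m * hcoeff

/- The error `F n - f_k(α) * α ^ (n - 1)` is a weighted average of its `k` predecessors, since the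
weights `α ^ i * (2 - α)` have sum `1`. -/
theorem abs_sub_binetCoeff_mul_zpow_le (hF : IsKBonacci k F) (hk : 900 ≤ k) {α : ℝ}
    (hα : IsDominantRoot k α) {n : ℤ} (hn : 2 - (k : ℤ) ≤ n) :
    |F n - binetCoeff k α * α ^ (n - 1)| ≤ 1 := by
  have hα₀ := hα.pos
  have hg₀ : 0 ≤ binetCoeff k α := by linarith [hα.le_binetCoeff hk]
  have hg₁ := hα.binetCoeff_le_one hk
  refine int_induction_of_window (P := fun n => |(F n : ℝ) - binetCoeff k α * α ^ (n - 1)| ≤ 1)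
    (fun n hn hn₁ => ?_) (fun m ih => ?_) hn
  · have hpow : α ^ (n - 1) ≤ 1 := zpow_le_one_of_nonpos₀ (by linarith [hα.lt]) (by omega)
    have hmul : binetCoeff k α * α ^ (n - 1) ≤ 1 := mul_le_one₀ hg₁ (by positivity) hpow
    have hmul₀ : 0 ≤ binetCoeff k α * α ^ (n - 1) := by positivity
    have hFn : F n = 0 ∨ F n = 1 :=
      hn₁.lt_or_eq.imp (fun hlt => hF.eq_zero n hn (by omega))
        fun heq : n = 1 => by rw [heq, hF.one]
    rcases hFn with h | h <;> rw [h, abs_le] <;> push_cast <;> constructor <;> linarith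
  · have hsum := sum_range_pow_mul_two_sub (by linarith [hα.lt]) hα.pow_mul_two_sub
    rw [hF.sub_binetCoeff_mul_zpow_eq_sum (by omega) hα.pow_mul_two_sub
      (by linarith [hα.le_binetCoeff_denom hk]) m, ← hsum]
    refine (abs_sum_le_sum_abs _ _).trans (sum_le_sum fun i hi => ?_)
    have hweight : 0 ≤ α ^ i * (2 - α) := mul_nonneg (by positivity) (by linarith [hα.lt_two])
    rw [abs_mul, abs_of_nonneg hweight]
    exact mul_le_of_le_one_right hweight (ih i (mem_range.1 hi))

end IsKBonacci

end GeneralizedFibonacci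

section NearRepdigits

namespace IsKBonacci

variable {k : ℕ} {F : ℤ → ℤ}

theorem lt_five_mul_of_nine_mul_eq (hF : IsKBonacci k F) (hk : 900 ≤ k) {A c : ℤ} {M p : ℕ}
    (heq : 9 * F (p + 2) = A * 10 ^ M + c) (hA : A ≤ 9 * (2 : ℝ) ^ ((k : ℝ) / 2))
    (hc : |(c : ℝ)| ≤ 9 * (2 : ℝ) ^ ((k : ℝ) / 2)) : p < 5 * (2 : ℝ) ^ ((k : ℝ) / 2) := by
  by_contra! hp
  obtain ⟨α, hα⟩ := exists_isDominantRoot hk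
  have hT : (2 : ℝ) ^ 20 ≤ 2 ^ ((k : ℝ) / 2) := two_pow_le_two_rpow_half (by omega)
  have hN : 5 * (2 : ℝ) ^ ((k : ℝ) / 2) ≤ (p + 1 : ℕ) := by push_cast; linarith
  have hexp : ((p + 1 : ℕ) : ℝ) ≤ Real.exp ((p + 1 : ℕ) / 100) := by
    refine natCast_le_exp_div_hundred ?_
    exact_mod_cast (show (20000 : ℝ) ≤ (p + 1 : ℕ) by linarith)
  have hbinet : |9 * binetCoeff k α * α ^ (p + 1) - 9 * F (p + 2)| ≤ 9 := by
    have h := hF.abs_sub_binetCoeff_mul_zpow_le hk hα (n := p + 2) (by omega)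
    rw [show (p + 2 - 1 : ℤ) = (p + 1 : ℕ) by push_cast; ring, zpow_natCast, abs_le] at h
    rw [abs_le]
    constructor <;> linarith
  have hupper : |9 * binetCoeff k α * α ^ (p + 1) - A * 10 ^ M| ≤
      9 + 9 * (2 : ℝ) ^ ((k : ℝ) / 2) := by
    have heq' : (9 * F (p + 2) : ℝ) = A * 10 ^ M + c := mod_cast heq
    calc |9 * binetCoeff k α * α ^ (p + 1) - A * 10 ^ M|
        = |(9 * binetCoeff k α * α ^ (p + 1) - 9 * F (p + 2)) + c| := by rw [heq']; ring_nf
      _ ≤ 9 + 9 * (2 : ℝ) ^ ((k : ℝ) / 2) := (abs_add_le _ _).trans (add_le_add hbinet hc)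
  linarith [hα.two_mul_exp_lt_abs_sub hk hN hA M]

theorem abs_mul_zpow_sub_one_le (hF : IsKBonacci k F) (hk : 0 < k) (p : ℕ) :
    |F (p + 2) * (2 : ℝ) ^ (-(p : ℤ)) - 1| ≤ p / 2 ^ k := by
  have hle : (F (p + 2) : ℝ) ≤ 2 ^ p := mod_cast hF.le_two_pow hk p
  have hgap : (2 : ℝ) ^ k * (2 ^ p - F (p + 2)) ≤ p * 2 ^ p :=
    mod_cast hF.two_pow_mul_two_pow_sub_le hk p
  rw [zpow_neg, zpow_natCast, ← div_eq_mul_inv, abs_sub_comm, abs_of_nonneg,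
    le_div_iff₀ (by positivity), one_sub_div (by positivity), div_mul_eq_mul_div,
    div_le_iff₀ (by positivity)]
  · linarith
  · rw [sub_nonneg]
    exact div_le_one_of_le₀ hle (by positivity)

end IsKBonacci

theorem Gamma4_small_general {k : ℕ} (hk : 900 ≤ k) {F : ℤ → ℤ} (hF : IsKBonacci k F) {n : ℤ}
    (hnk : k + 2 ≤ n) {A c : ℤ} {M : ℕ} (heq : 9 * F n = A * 10 ^ M + c)
    (hA : A ≤ 9 * (2 : ℝ) ^ ((k : ℝ) / 2)) (hc : |(c : ℝ)| ≤ 9 * (2 : ℝ) ^ ((k : ℝ) / 2)) :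
    |1 / 9 * A * 10 ^ M * (2 : ℝ) ^ (-(n - 2)) - 1| < 8 * (2 : ℝ) ^ (-((k : ℝ) / 2)) := by
  obtain ⟨p, rfl⟩ : ∃ p : ℕ, n = p + 2 := ⟨(n - 2).toNat, by omega⟩
  have hp := hF.lt_five_mul_of_nine_mul_eq hk heq hA hc
  set T := (2 : ℝ) ^ ((k : ℝ) / 2) with hT
  have hT₀ : 0 < T := by positivity
  have hTT : (2 : ℝ) ^ k = T * T := by
    rw [hT, ← Real.rpow_add two_pos, add_halves, Real.rpow_natCast]
  have hmain : |F (p + 2) * (2 : ℝ) ^ (-(p : ℤ)) - 1| ≤ 5 / T := by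
    refine (hF.abs_mul_zpow_sub_one_le (by omega) p).trans ?_
    rw [hTT, div_le_div_iff₀ (by positivity) hT₀]
    nlinarith
  have herror : |c / 9 * (2 : ℝ) ^ (-(p : ℤ))| ≤ 1 / T := by
    have hkp : (2 : ℝ) ^ k ≤ 2 ^ p := pow_le_pow_right₀ one_le_two (by omega)
    rw [zpow_neg, zpow_natCast, ← div_eq_mul_inv, abs_div, abs_div, abs_of_pos (by positivity :
      (0 : ℝ) < 2 ^ p), abs_of_pos (by norm_num : (0 : ℝ) < 9), div_le_div_iff₀ (by positivity) hT₀]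
    nlinarith
  have heq' : (9 * F (p + 2) : ℝ) = A * 10 ^ M + c := mod_cast heq
  calc |1 / 9 * A * 10 ^ M * (2 : ℝ) ^ (-((p : ℤ) + 2 - 2)) - 1|
      = |(F (p + 2) * (2 : ℝ) ^ (-(p : ℤ)) - 1) - c / 9 * (2 : ℝ) ^ (-(p : ℤ))| := by
        rw [add_sub_cancel_right]
        congr 1
        linear_combination -(1 / 9 : ℝ) * (2 : ℝ) ^ (-(p : ℤ)) * heq'
    _ ≤ 5 / T + 1 / T := (abs_sub _ _).trans (add_le_add hmain herror)
    _ = 6 * T⁻¹ := by ring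
    _ < 8 * T⁻¹ := by gcongr; norm_num
    _ = 8 * (2 : ℝ) ^ (-((k : ℝ) / 2)) := by rw [Real.rpow_neg two_pos.le]

theorem nine_mul_repdigit_concat (a b : ℤ) (ℓ m : ℕ) :
    9 * (a * ((10 ^ ℓ - 1) / 9) * 10 ^ (ℓ + m) + b * ((10 ^ m - 1) / 9) * 10 ^ ℓ +
      a * ((10 ^ ℓ - 1) / 9)) =
      (a * 10 ^ ℓ - (a - b)) * 10 ^ (ℓ + m) + ((a - b) * 10 ^ ℓ - a) := by
  have hdiv (j : ℕ) : (9 : ℤ) * ((10 ^ j - 1) / 9) = 10 ^ j - 1 :=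
    Int.mul_ediv_cancel' (by simpa using sub_dvd_pow_sub_pow (10 : ℤ) 1 j)
  rw [pow_add]
  linear_combination (a * (10 ^ ℓ * 10 ^ m) + a) * hdiv ℓ + b * 10 ^ ℓ * hdiv m

theorem digit_mul_sub_sub_le {a b : ℕ} (ha : a ≤ 9) (hb : b ≤ 9) (ℓ : ℕ) :
    (a : ℝ) * 10 ^ ℓ - (a - b) ≤ 9 * 10 ^ ℓ := by
  have hone : (1 : ℝ) ≤ 10 ^ ℓ := one_le_pow₀ (by norm_num)
  have ha' : (a : ℝ) ≤ 9 := mod_cast ha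
  have hb' : (b : ℝ) ≤ 9 := mod_cast hb
  nlinarith

theorem abs_digit_sub_mul_sub_le {a b : ℕ} (ha : a ≤ 9) (hb : b ≤ 9) (ℓ : ℕ) :
    |((a : ℝ) - b) * 10 ^ ℓ - a| ≤ 9 * 10 ^ ℓ := by
  have hone : (1 : ℝ) ≤ 10 ^ ℓ := one_le_pow₀ (by norm_num)
  have ha' : (a : ℝ) ≤ 9 := mod_cast ha
  have hb' : (b : ℝ) ≤ 9 := mod_cast hb
  have ha₀ : (0 : ℝ) ≤ a := a.cast_nonneg
  have hb₀ : (0 : ℝ) ≤ b := b.cast_nonneg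
  rw [abs_le]
  constructor <;> nlinarith

theorem ten_pow_le_two_rpow_of_mul_log_div_log_le {ℓ : ℕ} {x : ℝ}
    (h : ℓ * Real.log 10 / Real.log 2 ≤ x) : (10 : ℝ) ^ ℓ ≤ 2 ^ x := by
  rw [div_le_iff₀ (Real.log_pos one_lt_two)] at h
  rw [← Real.log_le_log_iff (by positivity) (by positivity), Real.log_pow, Real.log_rpow two_pos]
  exact h

end NearRepdigits

/-- Under the hypotheses of the main equation with k > 900, n ≥ k + 2 and
k/2 > ℓ·log 10/log 2,
|(1/9)·(d1·10^ℓ − (d1 − d2))·10^{ℓ+m}·2^{−(n−2)} − 1| < 8·2^{−k/2}. -/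
theorem Gamma4_small
    (k : ℕ) (hk : 900 < k) (F : ℤ → ℤ)
    (hF0 : ∀ n : ℤ, 2 - (k : ℤ) ≤ n → n ≤ 0 → F n = 0)
    (hF1 : F 1 = 1)
    (hFrec : ∀ n : ℤ, 2 ≤ n → F n = ∑ i ∈ Finset.range k, F (n - 1 - (i : ℤ)))
    (n : ℤ) (hn : 9 ≤ n) (hnk : (k : ℤ) + 2 ≤ n)
    (d1 d2 : ℕ) (hd1 : d1 ≤ 9) (hd2 : d2 ≤ 9) (hd1pos : 0 < d1) (hne : d1 ≠ d2)
    (ℓ m : ℕ) (hℓ : 1 ≤ ℓ) (hm : 1 ≤ m)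
    (heq : F n = (d1 : ℤ) * ((10 ^ ℓ - 1) / 9) * 10 ^ (ℓ + m)
        + (d2 : ℤ) * ((10 ^ m - 1) / 9) * 10 ^ ℓ
        + (d1 : ℤ) * ((10 ^ ℓ - 1) / 9))
    (hmin : (ℓ : ℝ) * Real.log 10 / Real.log 2 < (k : ℝ) / 2) :
    |1 / 9 * ((d1 : ℝ) * 10 ^ ℓ - ((d1 : ℝ) - (d2 : ℝ))) * 10 ^ (ℓ + m)
        * (2 : ℝ) ^ (-(n - 2)) - 1|
      < 8 * (2 : ℝ) ^ (-((k : ℝ) / 2)) := by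
  have hpow := ten_pow_le_two_rpow_of_mul_log_div_log_le hmin.le
  have hgeneral := Gamma4_small_general hk.le ⟨hF0, hF1, hFrec⟩ hnk
    ((congrArg (9 * ·) heq).trans (nine_mul_repdigit_concat d1 d2 ℓ m))
    (mod_cast (digit_mul_sub_sub_le hd1 hd2 ℓ).trans (by gcongr))
    (mod_cast (abs_digit_sub_mul_sub_le hd1 hd2 ℓ).trans (by gcongr))
  exact_mod_cast hgeneral
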